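/- arXiv:1706.08465 — 3 statements merged into one kernel-verified Lean document; each statement's English description precedes it below -/
import Mathlib

section
/- Let H be a P^4_2-free 4-uniform hypergraph with minimum degree at least 11. Then the signature of no edge e contains a 3-element set and a 2-element set intersecting in exactly one vertex. -/
/-!
Write the three edges as `abcd`, `abcp` and `g ∋ c, d`. Since `g` meets `abcp` in `c` but not in
`a`, `b`, it contains `p`, say `g = cdpq`. An edge through `q` either lies inside `abcdpq`, which
leaves `10` possibilities, or is one of `acqy`, `bcqy` with `y` a new vertex. As `q` has degree at
least `11`, some `acqy` is an edge, up to exchanging `a` and `b`. Now at most `8` edges through `y`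
avoid having both `a` and `b`, so there are two edges `abys`, `abyt`; these force every edge
through `q` leaving `abcdpq` to be `acqy` or `bcqy` with this same `y`. Of the resulting `12`
candidates for the edges through `q`, the set `bdpq` is excluded by `acqy`, and `bcqy` and `adpq`
exclude each other, so `q` has degree at most `10`.
-/

open Finset

section

variable {V : Type*} [DecidableEq V]

theorem card_quad_of_nodup {x y u v : V} (hnodup : [x, y, u, v].Nodup) :
    #({x, y, u, v} : Finset V) = 4 := by
  simpa using List.toFinset_card_of_nodup hnodup

theorem eq_quad_of_card_eq_four {e : Finset V} (he : #e = 4) {x y u v : V}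
    (hnodup : [x, y, u, v].Nodup) (hx : x ∈ e) (hy : y ∈ e) (hu : u ∈ e) (hv : v ∈ e) :
    e = {x, y, u, v} :=
  (eq_of_subset_of_card_le (by grind) (by rw [he, card_quad_of_nodup hnodup])).symm

theorem exists_eq_quad_of_card_eq_four {e : Finset V} (he : #e = 4) {x y u : V}
    (hnodup : [x, y, u].Nodup) (hx : x ∈ e) (hy : y ∈ e) (hu : u ∈ e) :
    ∃ v ∉ ({x, y, u} : Finset V), e = {x, y, u, v} := by
  have hlt : #({x, y, u} : Finset V) < #e := by
    rw [he]
    exact Nat.lt_succ_of_le card_le_three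
  obtain ⟨v, hv, hvnot⟩ := exists_mem_notMem_of_card_lt_card hlt
  have hnodup' : [x, y, u, v].Nodup := by
    simp only [mem_insert, mem_singleton] at hvnot
    grind
  exact ⟨v, hvnot, eq_quad_of_card_eq_four he hnodup' hx hy hu hv⟩

theorem exists_eq_quad_eq_quad {e f g : Finset V} (he : #e = 4) (hf : #f = 4)
    (hef : #(e ∩ f) = 3) (heg : #(e ∩ g) = 2) (hefg : #((e ∩ f) ∩ (e ∩ g)) = 1) :
    ∃ a b c d p, [a, b, c, d, p].Nodup ∧ e = {a, b, c, d} ∧ f = {a, b, c, p} ∧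
      a ∉ g ∧ b ∉ g ∧ c ∈ g ∧ d ∈ g := by
  obtain ⟨c, hc⟩ := card_eq_one.1 hefg
  obtain ⟨a, b, hab, habeq⟩ : ∃ a b, a ≠ b ∧ (e ∩ f) \ (e ∩ g) = {a, b} := by
    rw [← card_eq_two]
    have := card_sdiff_add_card_inter (e ∩ f) (e ∩ g)
    lia
  obtain ⟨d, hd⟩ : ∃ d, (e ∩ g) \ (e ∩ f) = {d} := by
    rw [← card_eq_one]
    have := card_sdiff_add_card_inter (e ∩ g) (e ∩ f)
    rw [inter_comm (e ∩ g)] at this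
    lia
  obtain ⟨p, hp⟩ : ∃ p, f \ e = {p} := by
    rw [← card_eq_one]
    have := card_sdiff_add_card_inter f e
    rw [inter_comm f] at this
    lia
  have hcmem : c ∈ (e ∩ f) ∩ (e ∩ g) := by simp [hc]
  have hamem : a ∈ (e ∩ f) \ (e ∩ g) := by simp [habeq]
  have hbmem : b ∈ (e ∩ f) \ (e ∩ g) := by simp [habeq]
  have hdmem : d ∈ (e ∩ g) \ (e ∩ f) := by simp [hd]
  have hpmem : p ∈ f \ e := by simp [hp]
  simp only [mem_inter, mem_sdiff] at hcmem hamem hbmem hdmem hpmem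
  clear hc habeq hd hp
  refine ⟨a, b, c, d, p, ?_, ?_, ?_, by tauto, by tauto, by tauto, by tauto⟩
  · simp only [List.nodup_cons, List.mem_cons, List.not_mem_nil, or_false, not_or, List.nodup_nil,
      not_false_eq_true, and_true]
    grind
  · exact eq_quad_of_card_eq_four he (by grind) (by tauto) (by tauto) (by tauto) (by tauto)
  · exact eq_quad_of_card_eq_four hf (by grind) (by tauto) (by tauto) (by tauto) (by tauto)

/-- The four-element sets through `v` whose other vertices lie in `S`, obtained by adding `v` to the
three-element subsets of `S`; this is meant for `v ∉ S`. -/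
def quadsThrough (v : V) (S : Finset V) : Finset (Finset V) :=
  (S.powersetCard 3).image (insert v)

theorem card_quadsThrough_le (v : V) (S : Finset V) : #(quadsThrough v S) ≤ (#S).choose 3 :=
  card_image_le.trans_eq (card_powersetCard 3 S)

theorem card_quadsThrough_five_le (v a b c d p : V) : #(quadsThrough v {a, b, c, d, p}) ≤ 10 :=
  (card_quadsThrough_le v _).trans (Nat.choose_le_choose 3 card_le_five)

theorem mem_quadsThrough {v : V} {S e : Finset V} (he : #e = 4) (hv : v ∈ e)
    (hsub : e ⊆ insert v S) : e ∈ quadsThrough v S :=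
  mem_image.2 ⟨e.erase v, mem_powersetCard.2
    ⟨subset_insert_iff.1 hsub, by rw [card_erase_of_mem hv, he]⟩, insert_erase hv⟩

/-- The edges of the hypergraph `H` containing `v`; their number is the degree of `v`. -/
def edgesAt (H : Finset (Finset V)) (v : V) : Finset (Finset V) := {e ∈ H | v ∈ e}

theorem mem_edgesAt {H : Finset (Finset V)} {v : V} {e : Finset V} :
    e ∈ edgesAt H v ↔ e ∈ H ∧ v ∈ e :=
  mem_filter

/-- `H` is a `P^4_2`-free `4`-uniform hypergraph, given by its set of edges. -/
structure IsFourUniformP2Free (H : Finset (Finset V)) : Prop where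
  card_eq_four : ∀ e ∈ H, #e = 4
  card_inter_ne_one : ∀ e ∈ H, ∀ f ∈ H, e ≠ f → #(e ∩ f) ≠ 1

namespace IsFourUniformP2Free

variable {H : Finset (Finset V)} {e f : Finset V}

theorem exists_ne_mem (hH : IsFourUniformP2Free H) (he : e ∈ H) (hf : f ∈ H) {x : V}
    (hxe : x ∈ e) (hxf : x ∈ f) : ∃ y ∈ e, y ∈ f ∧ y ≠ x := by
  have hcard : 1 < #(e ∩ f) := by
    have hpos : 0 < #(e ∩ f) := card_pos.2 ⟨x, mem_inter.2 ⟨hxe, hxf⟩⟩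
    rcases eq_or_ne e f with rfl | hne
    · simp [hH.card_eq_four e he]
    · have := hH.card_inter_ne_one e he f hf hne
      lia
  obtain ⟨y, hy, hyx⟩ := exists_mem_ne hcard x
  exact ⟨y, (mem_inter.1 hy).1, (mem_inter.1 hy).2, hyx⟩

theorem mem_or_mem_of_quad_mem (hH : IsFourUniformP2Free H) {x y u v : V}
    (hquad : {x, y, u, v} ∈ H) (hf : f ∈ H) :
    (x ∈ f → y ∈ f ∨ u ∈ f ∨ v ∈ f) ∧ (y ∈ f → x ∈ f ∨ u ∈ f ∨ v ∈ f) ∧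
      (u ∈ f → x ∈ f ∨ y ∈ f ∨ v ∈ f) ∧ (v ∈ f → x ∈ f ∨ y ∈ f ∨ u ∈ f) := by
  have hsecond : ∀ z ∈ ({x, y, u, v} : Finset V), z ∈ f →
      ∃ w ∈ ({x, y, u, v} : Finset V), w ∈ f ∧ w ≠ z :=
    fun z hz hzf ↦ hH.exists_ne_mem hquad hf hz hzf
  simp only [mem_insert, mem_singleton] at hsecond
  grind

end IsFourUniformP2Free

/-- Edges `abcd`, `abcp`, `cdpq` on six distinct vertices. This is the shape of an edge `abcd`
together with two edges witnessing a `3`-set `abc` and a `2`-set `cd` in its signature. -/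
structure SignatureConfig (H : Finset (Finset V)) (a b c d p q : V) : Prop where
  nodup : [a, b, c, d, p, q].Nodup
  abcd_mem : {a, b, c, d} ∈ H
  abcp_mem : {a, b, c, p} ∈ H
  cdpq_mem : {c, d, p, q} ∈ H

/-- A `SignatureConfig` with a further edge `acqy` leaving its six vertices. -/
structure ExtendedConfig (H : Finset (Finset V)) (a b c d p q y : V) : Prop
    extends SignatureConfig H a b c d p q where
  notMem : y ∉ ({a, b, c, d, p, q} : Finset V)
  acqy_mem : {a, c, q, y} ∈ H

namespace SignatureConfig

variable {H : Finset (Finset V)} {a b c d p q : V} {e : Finset V}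

theorem pairwise_ne (C : SignatureConfig H a b c d p q) :
    (a ≠ b ∧ a ≠ c ∧ a ≠ d ∧ a ≠ p ∧ a ≠ q) ∧ (b ≠ c ∧ b ≠ d ∧ b ≠ p ∧ b ≠ q) ∧
      (c ≠ d ∧ c ≠ p ∧ c ≠ q) ∧ (d ≠ p ∧ d ≠ q) ∧ p ≠ q := by
  simpa using C.nodup

theorem swap (C : SignatureConfig H a b c d p q) : SignatureConfig H b a c d p q where
  nodup := (List.Perm.swap b a _).nodup C.nodup
  abcd_mem := by simpa only [insert_comm] using C.abcd_mem
  abcp_mem := by simpa only [insert_comm] using C.abcp_mem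
  cdpq_mem := C.cdpq_mem

theorem eq_of_mem_of_notMem (C : SignatureConfig H a b c d p q) (hH : IsFourUniformP2Free H)
    (he : e ∈ H) (hqe : q ∈ e) {y : V} (hye : y ∈ e) (hy : y ∉ ({a, b, c, d, p, q} : Finset V)) :
    e = {a, c, q, y} ∨ e = {b, c, q, y} := by
  have hne := C.pairwise_ne
  have habcd := hH.mem_or_mem_of_quad_mem C.abcd_mem he
  have habcp := hH.mem_or_mem_of_quad_mem C.abcp_mem he
  have hcdpq := hH.mem_or_mem_of_quad_mem C.cdpq_mem he
  have hfour : ∀ x z, [x, z, q, y].Nodup → x ∈ e → z ∈ e → e = {x, z, q, y} :=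
    fun x z hnodup hx hz ↦ eq_quad_of_card_eq_four (hH.card_eq_four e he) hnodup hx hz hqe hye
  simp only [List.nodup_cons, List.mem_cons, List.not_mem_nil, or_false, not_or, List.nodup_nil,
    not_false_eq_true, and_true] at hfour
  simp only [mem_insert, mem_singleton, not_or] at hy
  have hce : c ∈ e := by grind
  have habe : a ∈ e ∨ b ∈ e := by grind
  exact habe.imp (hfour a c (by grind) · hce) (hfour b c (by grind) · hce)

theorem exists_extendedConfig (C : SignatureConfig H a b c d p q) (hH : IsFourUniformP2Free H)
    (hdeg : 10 < #(edgesAt H q)) :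
    ∃ y, ExtendedConfig H a b c d p q y ∨ ExtendedConfig H b a c d p q y := by
  obtain ⟨e, he, hout⟩ := exists_mem_notMem_of_card_lt_card
    ((card_quadsThrough_five_le q a b c d p).trans_lt hdeg)
  obtain ⟨heH, hqe⟩ := mem_edgesAt.1 he
  have hsub : ¬ e ⊆ insert q {a, b, c, d, p} :=
    mt (mem_quadsThrough (hH.card_eq_four e heH) hqe) hout
  obtain ⟨y, hye, hy⟩ := not_subset.1 hsub
  have hy' : y ∉ ({a, b, c, d, p, q} : Finset V) := by grind
  rcases C.eq_of_mem_of_notMem hH heH hqe hye hy' with rfl | rfl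
  · exact ⟨y, .inl ⟨C, hy', heH⟩⟩
  · exact ⟨y, .inr ⟨C.swap, by rwa [insert_comm], heH⟩⟩

end SignatureConfig

namespace ExtendedConfig

variable {H : Finset (Finset V)} {a b c d p q y : V} {e : Finset V}

/-- The possible edges through `y` in an `ExtendedConfig` that do not contain both `a` and `b`. -/
def exceptionalQuads (a b c d p q y : V) : Finset (Finset V) :=
  image₂ (fun x z ↦ {x, c, z, y}) {a, b} {d, p, q} ∪ {{a, d, p, y}, {c, d, p, y}}

theorem card_exceptionalQuads_le (a b c d p q y : V) : #(exceptionalQuads a b c d p q y) ≤ 8 :=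
  calc #(exceptionalQuads a b c d p q y)
      ≤ #({a, b} : Finset V) * #({d, p, q} : Finset V) +
          #({{a, d, p, y}, {c, d, p, y}} : Finset (Finset V)) :=
        (card_union_le _ _).trans (Nat.add_le_add_right (card_image₂_le _ _ _) _)
    _ ≤ 2 * 3 + 2 := Nat.add_le_add (Nat.mul_le_mul card_le_two card_le_three) card_le_two

theorem mem_exceptionalQuads (C : ExtendedConfig H a b c d p q y) (hH : IsFourUniformP2Free H)
    (he : e ∈ H) (hye : y ∈ e) (hab : ¬ (a ∈ e ∧ b ∈ e)) :
    e ∈ exceptionalQuads a b c d p q y := by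
  have hne := C.pairwise_ne
  have hy := C.notMem
  have habcd := hH.mem_or_mem_of_quad_mem C.abcd_mem he
  have habcp := hH.mem_or_mem_of_quad_mem C.abcp_mem he
  have hcdpq := hH.mem_or_mem_of_quad_mem C.cdpq_mem he
  have hacqy := hH.mem_or_mem_of_quad_mem C.acqy_mem he
  have hfour : ∀ x z w, [x, z, w, y].Nodup → x ∈ e → z ∈ e → w ∈ e → e = {x, z, w, y} :=
    fun x z w hnodup hx hz hw ↦ eq_quad_of_card_eq_four (hH.card_eq_four e he) hnodup hx hz hw hye
  simp only [List.nodup_cons, List.mem_cons, List.not_mem_nil, or_false, not_or, List.nodup_nil,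
    not_false_eq_true, and_true] at hfour
  simp only [mem_insert, mem_singleton, not_or] at hy
  simp only [exceptionalQuads, mem_union, mem_image₂, mem_insert, mem_singleton]
  by_cases hce : c ∈ e
  · by_cases hxe : ∃ x, (x = a ∨ x = b) ∧ x ∈ e
    · obtain ⟨x, hx, hxe⟩ := hxe
      obtain ⟨z, hz, hze⟩ : ∃ z, (z = d ∨ z = p ∨ z = q) ∧ z ∈ e := by grind
      exact .inl ⟨x, hx, z, hz, (hfour x c z (by grind) hxe hce hze).symm⟩
    · have hde : d ∈ e := by grind
      have hpe : p ∈ e := by grind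
      exact .inr (.inr (hfour c d p (by grind) hce hde hpe))
  · obtain ⟨hde, hpe⟩ : d ∈ e ∧ p ∈ e := by grind
    have hae : a ∈ e := by
      by_contra hae
      have hbe : b ∈ e := by grind
      have hqe : q ∈ e := by grind
      rw [hfour b d p (by grind) hbe hde hpe] at hqe
      simp only [mem_insert, mem_singleton] at hqe
      grind
    exact .inr (.inl (hfour a d p (by grind) hae hde hpe))

theorem exists_eq_of_mem_of_mem (C : ExtendedConfig H a b c d p q y) (hH : IsFourUniformP2Free H)
    (he : e ∈ H) (hye : y ∈ e) (hae : a ∈ e) (hbe : b ∈ e) :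
    ∃ z ∉ ({a, b, c, d, p, q, y} : Finset V), e = {a, b, y, z} := by
  have hne := C.pairwise_ne
  have hy := C.notMem
  have hcdpq := hH.mem_or_mem_of_quad_mem C.cdpq_mem he
  simp only [mem_insert, mem_singleton, not_or] at hy
  obtain ⟨z, hz, rfl⟩ :=
    exists_eq_quad_of_card_eq_four (hH.card_eq_four e he) (by grind) hae hbe hye
  simp only [mem_insert, mem_singleton, not_or] at hz hcdpq
  refine ⟨z, ?_, rfl⟩
  simp only [mem_insert, mem_singleton, not_or]
  grind

theorem exists_abyz_mem_abyw_mem (C : ExtendedConfig H a b c d p q y)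
    (hH : IsFourUniformP2Free H) (hdeg : 9 < #(edgesAt H y)) :
    ∃ z ∉ ({a, b, c, d, p, q, y} : Finset V), ∃ w ∉ ({a, b, c, d, p, q, y} : Finset V),
      z ≠ w ∧ {a, b, y, z} ∈ H ∧ {a, b, y, w} ∈ H := by
  have hcard : 1 < #(edgesAt H y \ exceptionalQuads a b c d p q y) := by
    have := le_card_sdiff (exceptionalQuads a b c d p q y) (edgesAt H y)
    have := card_exceptionalQuads_le a b c d p q y
    lia
  have hshape : ∀ e ∈ edgesAt H y \ exceptionalQuads a b c d p q y,
      e ∈ H ∧ ∃ z ∉ ({a, b, c, d, p, q, y} : Finset V), e = {a, b, y, z} := by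
    intro e he
    obtain ⟨heat, hnot⟩ := mem_sdiff.1 he
    obtain ⟨heH, hye⟩ := mem_edgesAt.1 heat
    obtain ⟨hae, hbe⟩ := not_not.1 (mt (C.mem_exceptionalQuads hH heH hye) hnot)
    exact ⟨heH, C.exists_eq_of_mem_of_mem hH heH hye hae hbe⟩
  obtain ⟨e, he, f, hf, hef⟩ := one_lt_card.1 hcard
  obtain ⟨heH, z, hz, rfl⟩ := hshape e he
  obtain ⟨hfH, w, hw, rfl⟩ := hshape f hf
  exact ⟨z, hz, w, hw, fun hzw ↦ hef (by rw [hzw]), heH, hfH⟩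

theorem vertex_eq_of_mem_of_notMem (C : ExtendedConfig H a b c d p q y)
    (hH : IsFourUniformP2Free H) (hdeg : 9 < #(edgesAt H y)) (he : e ∈ H) (hqe : q ∈ e)
    {z : V} (hze : z ∈ e) (hz : z ∉ ({a, b, c, d, p, q} : Finset V)) : z = y := by
  obtain ⟨s, hs, t, ht, hst, hsH, htH⟩ := C.exists_abyz_mem_abyw_mem hH hdeg
  have hne := C.pairwise_ne
  have hy := C.notMem
  have habys := hH.mem_or_mem_of_quad_mem hsH he
  have habyt := hH.mem_or_mem_of_quad_mem htH he
  have heq := C.toSignatureConfig.eq_of_mem_of_notMem hH he hqe hze hz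
  simp only [mem_insert, mem_singleton, not_or] at hs ht hy hz
  rcases heq with rfl | rfl <;>
  · simp only [mem_insert, mem_singleton] at habys habyt
    grind

/-- The sets through `q` that can be edges once all edges through `q` leaving `abcdpq` contain
`y`. -/
def candidateQuads (a b c d p q y : V) : Finset (Finset V) :=
  insert {a, c, q, y} (insert {b, c, q, y} (quadsThrough q {a, b, c, d, p}))

theorem card_candidateQuads_le (a b c d p q y : V) : #(candidateQuads a b c d p q y) ≤ 12 :=
  (card_insert_le _ _).trans <| Nat.succ_le_succ <| (card_insert_le _ _).trans <|
    Nat.succ_le_succ <| card_quadsThrough_five_le q a b c d p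

theorem edgesAt_subset_candidateQuads (C : ExtendedConfig H a b c d p q y)
    (hH : IsFourUniformP2Free H) (hdeg : 9 < #(edgesAt H y)) :
    edgesAt H q ⊆ candidateQuads a b c d p q y := by
  intro e he
  obtain ⟨heH, hqe⟩ := mem_edgesAt.1 he
  simp only [candidateQuads, mem_insert]
  by_cases hsub : e ⊆ insert q {a, b, c, d, p}
  · exact .inr (.inr (mem_quadsThrough (hH.card_eq_four e heH) hqe hsub))
  · obtain ⟨z, hze, hz⟩ := not_subset.1 hsub
    have hz' : z ∉ ({a, b, c, d, p, q} : Finset V) := by grind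
    obtain rfl := C.vertex_eq_of_mem_of_notMem hH hdeg heH hqe hze hz'
    exact (C.toSignatureConfig.eq_of_mem_of_notMem hH heH hqe hze hz').imp_right .inl

theorem bdpq_notMem (C : ExtendedConfig H a b c d p q y) (hH : IsFourUniformP2Free H) :
    {b, d, p, q} ∉ H := by
  intro hbdpq
  have hne := C.pairwise_ne
  have hy := C.notMem
  have := (hH.mem_or_mem_of_quad_mem C.acqy_mem hbdpq).2.2.1
  simp only [mem_insert, mem_singleton] at hy this
  grind

theorem adpq_notMem_of_bcqy_mem (C : ExtendedConfig H a b c d p q y) (hH : IsFourUniformP2Free H)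
    (hbcqy : {b, c, q, y} ∈ H) : {a, d, p, q} ∉ H := by
  have C' : ExtendedConfig H b a c d p q y :=
    ⟨C.swap, by simpa only [insert_comm] using C.notMem, hbcqy⟩
  exact C'.bdpq_notMem hH

theorem exists_mem_candidateQuads_notMem (C : ExtendedConfig H a b c d p q y)
    (hH : IsFourUniformP2Free H) :
    ∃ X ∈ candidateQuads a b c d p q y, X ≠ {b, d, p, q} ∧ X ∉ H := by
  have hne := C.pairwise_ne
  by_cases hbcqy : {b, c, q, y} ∈ H
  · have hmem : {a, d, p, q} ∈ quadsThrough q {a, b, c, d, p} :=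
      mem_quadsThrough (card_quad_of_nodup (by grind)) (by simp) (by grind)
    exact ⟨{a, d, p, q}, mem_insert_of_mem (mem_insert_of_mem hmem),
      ne_of_mem_of_not_mem' (a := a) (by simp) (by grind), C.adpq_notMem_of_bcqy_mem hH hbcqy⟩
  · exact ⟨{b, c, q, y}, mem_insert_of_mem (mem_insert_self _ _),
      ne_of_mem_of_not_mem' (a := c) (by simp) (by grind), hbcqy⟩

theorem card_edgesAt_le (C : ExtendedConfig H a b c d p q y) (hH : IsFourUniformP2Free H)
    (hdeg : 9 < #(edgesAt H y)) : #(edgesAt H q) ≤ 10 := by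
  have hne := C.pairwise_ne
  obtain ⟨X, hX, hXne, hXH⟩ := C.exists_mem_candidateQuads_notMem hH
  have hbdpq : {b, d, p, q} ∈ candidateQuads a b c d p q y :=
    mem_insert_of_mem (mem_insert_of_mem
      (mem_quadsThrough (card_quad_of_nodup (by grind)) (by simp) (by grind)))
  have hsub : edgesAt H q ⊆ candidateQuads a b c d p q y \ {X, {b, d, p, q}} := by
    intro e he
    have heH := (mem_edgesAt.1 he).1
    have heX : e ≠ X := ne_of_mem_of_not_mem heH hXH
    have hebdpq : e ≠ {b, d, p, q} := ne_of_mem_of_not_mem heH (C.bdpq_notMem hH)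
    simpa [heX, hebdpq] using C.edgesAt_subset_candidateQuads hH hdeg he
  calc #(edgesAt H q)
      ≤ #(candidateQuads a b c d p q y \ {X, {b, d, p, q}}) := card_le_card hsub
    _ = #(candidateQuads a b c d p q y) - 2 := by
        rw [card_sdiff_of_subset (insert_subset hX (singleton_subset_iff.2 hbdpq)),
          card_pair hXne]
    _ ≤ 10 := Nat.sub_le_of_le_add (card_candidateQuads_le a b c d p q y)

end ExtendedConfig

theorem SignatureConfig.exists_card_edgesAt_le {H : Finset (Finset V)} {a b c d p q : V}
    (C : SignatureConfig H a b c d p q) (hH : IsFourUniformP2Free H) :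
    ∃ v, #(edgesAt H v) ≤ 10 := by
  by_contra! hdeg
  obtain ⟨y, C' | C'⟩ := C.exists_extendedConfig hH (hdeg q)
  all_goals exact (C'.card_edgesAt_le hH (Nat.lt_of_succ_lt (hdeg y))).not_gt (hdeg q)

theorem exists_signatureConfig {H : Finset (Finset V)} (hH : IsFourUniformP2Free H)
    {e f g : Finset V} (he : e ∈ H) (hf : f ∈ H) (hg : g ∈ H) (hef : #(e ∩ f) = 3)
    (heg : #(e ∩ g) = 2) (hefg : #((e ∩ f) ∩ (e ∩ g)) = 1) :
    ∃ a b c d p q, SignatureConfig H a b c d p q := by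
  obtain ⟨a, b, c, d, p, hnodup, rfl, rfl, hag, hbg, hcg, hdg⟩ :=
    exists_eq_quad_eq_quad (hH.card_eq_four e he) (hH.card_eq_four f hf) hef heg hefg
  have hpg : p ∈ g := by
    have := (hH.mem_or_mem_of_quad_mem hf hg).2.2.1 hcg
    tauto
  obtain ⟨q, hq, rfl⟩ : ∃ q ∉ ({c, d, p} : Finset V), g = {c, d, p, q} :=
    exists_eq_quad_of_card_eq_four (hH.card_eq_four g hg) (by grind) hcg hdg hpg
  refine ⟨a, b, c, d, p, q, ?_, he, hf, hg⟩
  simp only [mem_insert, mem_singleton, not_or] at hq hag hbg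
  grind

end

/-- In a `P^4_2`-free 4-uniform hypergraph with minimum degree at least 11,
the signature of no edge contains a 3-element set and a 2-element set
intersecting in exactly one vertex. -/
theorem stmt_11 {V : Type*} [Fintype V] [DecidableEq V]
    (H : Finset (Finset V))
    (huniform : ∀ e ∈ H, e.card = 4)
    (hfree : ∀ e ∈ H, ∀ f ∈ H, e ≠ f → (e ∩ f).card ≠ 1)
    (hdeg : ∀ v : V, 11 ≤ (H.filter (fun e => v ∈ e)).card) :
    ∀ e ∈ H, ¬ ∃ f ∈ H, ∃ g ∈ H, f ≠ e ∧ g ≠ e ∧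
      (e ∩ f).card = 3 ∧ (e ∩ g).card = 2 ∧
      ((e ∩ f) ∩ (e ∩ g)).card = 1 := by
  rintro e he ⟨f, hf, g, hg, -, -, hef, heg, hefg⟩
  have hH : IsFourUniformP2Free H := ⟨huniform, hfree⟩
  obtain ⟨a, b, c, d, p, q, C⟩ := exists_signatureConfig hH he hf hg hef heg hefg
  obtain ⟨v, hv⟩ := C.exists_card_edgesAt_le hH
  exact hv.not_gt (hdeg v)
end

section
/- Let H be a P^4_2-free 4-uniform hypergraph with minimum degree at least 11. Then for every edge e, the signature of e consists either of exactly two disjoint 2-element sets, or of one 2-element set together with 3-element sets each containing that 2-element set (two triples intersecting on the dubleton). -/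
/-- `s` belongs to the signature of the edge `e` of `H`. -/
def InSig {V : Type*} [DecidableEq V] (H : Finset (Finset V))
    (e s : Finset V) : Prop :=
  ∃ f ∈ H, f ≠ e ∧ e ∩ f = s

/-!
The link of a vertex is an intersecting family of at least eleven triples. An intersecting family of
triples without a common vertex and with all pair codegrees at most three has at most ten members,
so either some vertex lies in the whole link, or the given vertex lies in a triple contained in at
least four edges. Such a heavy triple `T` meets every edge in `0` or at least `2` vertices, and
meets every other heavy triple in `0` or `2` vertices; this forces one pair of vertices of `T` to
lie in every edge meeting `T`. Either way, each vertex `v` has a partner `w ≠ v` that lies in every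
edge through `v`. Hence a two-element intersection `e ∩ f` is either contained in or disjoint from
each further edge, and the degree condition produces at least one such intersection.
-/

section

open Finset

variable {V : Type*} {A B F G H : Finset (Finset V)} {D S T T' a e f g : Finset V}
  {p q r v x y : V} {k c : ℕ}

/-- Every member of `A` meets every member of `B`. -/
def CrossIntersecting (A B : Finset (Finset V)) : Prop := ∀ a ∈ A, ∀ b ∈ B, ¬Disjoint a b

theorem CrossIntersecting.symm (h : CrossIntersecting A B) : CrossIntersecting B A :=
  fun b hb a ha hba ↦ h a ha b hb hba.symm

variable [DecidableEq V]

/-! ### Codegrees -/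

/-- The number of members of the family `F` that contain `T`. It is the degree of a vertex when `T`
is a singleton, the codegree of a pair when `T` has two elements, and `#F` when `T` is empty. -/
def codegree (F : Finset (Finset V)) (T : Finset V) : ℕ := #{f ∈ F | T ⊆ f}

theorem codegree_empty : codegree F ∅ = #F := by simp [codegree]

theorem codegree_singleton : codegree F {v} = #{f ∈ F | v ∈ f} := by simp [codegree]

theorem codegree_pos : 0 < codegree F T ↔ ∃ f ∈ F, T ⊆ f := by
  simp [codegree, card_pos, Finset.Nonempty]

theorem codegree_le_codegree (h : ∀ f ∈ F, S ⊆ f → f ∈ G ∧ T ⊆ f) :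
    codegree F S ≤ codegree G T :=
  card_le_card fun f hf ↦ mem_filter.2 <| h f (mem_filter.1 hf).1 (mem_filter.1 hf).2

theorem codegree_nonMemberSubfamily_add (F : Finset (Finset V)) (v : V) (T : Finset V) :
    codegree (F.nonMemberSubfamily v) T + codegree F (insert v T) = codegree F T := by
  have hv := card_filter_add_card_filter_not (s := {f ∈ F | T ⊆ f}) (v ∈ ·)
  simp only [filter_filter] at hv
  simp only [codegree, nonMemberSubfamily, filter_filter, insert_subset_iff, and_comm, ← hv,
    add_comm]

theorem card_nonMemberSubfamily_add_codegree (F : Finset (Finset V)) (v : V) :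
    #(F.nonMemberSubfamily v) + codegree F {v} = #F := by
  simpa [codegree_empty] using codegree_nonMemberSubfamily_add F v ∅

theorem codegree_memberSubfamily (hv : v ∉ T) :
    codegree (F.memberSubfamily v) T = codegree F (insert v T) := by
  refine card_nbij' (insert v) (erase · v) ?_ ?_ ?_ ?_ <;> intro f hf <;>
    simp only [coe_filter, mem_memberSubfamily, Set.mem_ofPred_eq] at hf ⊢
  · exact ⟨hf.1.1, insert_subset_insert v hf.2⟩
  · have hvf : v ∈ f := hf.2 (mem_insert_self v T)
    refine ⟨⟨by rw [insert_erase hvf]; exact hf.1, notMem_erase v f⟩, ?_⟩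
    exact subset_erase.2 ⟨(subset_insert v T).trans hf.2, hv⟩
  · exact erase_insert hf.1.2
  · exact insert_erase (hf.2 (mem_insert_self v T))

theorem card_memberSubfamily (F : Finset (Finset V)) (v : V) :
    #(F.memberSubfamily v) = codegree F {v} := by
  simpa [codegree_empty] using codegree_memberSubfamily (F := F) (notMem_empty v)

theorem sized_memberSubfamily (hF : (F : Set (Finset V)).Sized (k + 1)) :
    (F.memberSubfamily v : Set (Finset V)).Sized k := fun f hf ↦ by
  obtain ⟨hf, hvf⟩ := mem_memberSubfamily.1 hf
  simpa [card_insert_of_notMem hvf] using hF hf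

theorem codegree_le_card_mul (hS : ∀ f ∈ F, T ⊆ f → ¬Disjoint f S)
    (hc : ∀ y ∈ S, codegree F (insert y T) ≤ c) : codegree F T ≤ #S * c := by
  refine (card_le_card fun f hf ↦ ?_).trans (card_biUnion_le_card_mul S _ c hc)
  obtain ⟨hf, hTf⟩ := mem_filter.1 hf
  obtain ⟨y, hyf, hyS⟩ := not_disjoint_iff.1 (hS f hf hTf)
  exact mem_biUnion.2 ⟨y, hyS, mem_filter.2 ⟨hf, insert_subset hyf hTf⟩⟩

theorem card_le_card_mul (hS : ∀ f ∈ F, ¬Disjoint f S) (hc : ∀ y ∈ S, codegree F {y} ≤ c) :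
    #F ≤ #S * c := by
  rw [← codegree_empty]
  exact codegree_le_card_mul (fun f hf _ ↦ hS f hf) (by simpa using hc)

theorem filter_subset_image_insert (hF : (F : Set (Finset V)).Sized (#T + 1)) (hST : Disjoint S T)
    (hS : ∀ f ∈ F, T ⊆ f → ¬Disjoint f S) : {f ∈ F | T ⊆ f} ⊆ S.image (insert · T) := by
  intro f hf
  obtain ⟨hf, hTf⟩ := mem_filter.1 hf
  obtain ⟨y, hyf, hyS⟩ := not_disjoint_iff.1 (hS f hf hTf)
  refine mem_image.2 ⟨y, hyS, eq_of_subset_of_card_le (insert_subset hyf hTf) ?_⟩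
  rw [card_insert_of_notMem (disjoint_left.1 hST hyS), hF hf]

theorem codegree_le_card (hF : (F : Set (Finset V)).Sized (#T + 1)) (hST : Disjoint S T)
    (hS : ∀ f ∈ F, T ⊆ f → ¬Disjoint f S) : codegree F T ≤ #S :=
  (card_le_card (filter_subset_image_insert hF hST hS)).trans card_image_le

theorem insert_mem_of_card_le_codegree (hF : (F : Set (Finset V)).Sized (#T + 1))
    (hST : Disjoint S T) (hS : ∀ f ∈ F, T ⊆ f → ¬Disjoint f S) (h : #S ≤ codegree F T)
    (hx : x ∈ S) : insert x T ∈ F := by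
  have heq := eq_of_subset_of_card_le (filter_subset_image_insert hF hST hS)
    (card_image_le.trans h)
  exact (mem_filter.1 (heq ▸ mem_image_of_mem _ hx)).1

/-! ### Cross-intersecting families of pairs -/

theorem CrossIntersecting.mem_of_card_lt_codegree (h : CrossIntersecting A B)
    (hA : (A : Set (Finset V)).Sized 2) {b : Finset V} (hb : b ∈ B) (hx : #b < codegree A {x}) :
    x ∈ b := by
  by_contra hxb
  exact hx.not_ge <| codegree_le_card (by simpa using hA) (disjoint_singleton_right.2 hxb)
    fun a ha _ ↦ h a ha b hb

theorem erase_subset_of_not_disjoint {a b : Finset V} (hb : #b = 2) (hxb : x ∈ b) (hxa : x ∉ a)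
    (h : ¬Disjoint a b) : b.erase x ⊆ a := by
  obtain ⟨y, hya, hyb⟩ := not_disjoint_iff.1 h
  obtain ⟨u, hu⟩ := card_eq_one.1 (by rw [card_erase_of_mem hxb, hb] : #(b.erase x) = 1)
  have hy : y ∈ b.erase x := mem_erase.2 ⟨fun hyx ↦ hxa (hyx ▸ hya), hyb⟩
  rw [hu, mem_singleton] at hy
  simpa [hu, ← hy] using hya

theorem CrossIntersecting.card_nonMemberSubfamily_le_one (h : CrossIntersecting A B)
    (hA : (A : Set (Finset V)).Sized 2) (hB : (B : Set (Finset V)).Sized 2)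
    (hx : 2 ≤ codegree B {x}) : #(A.nonMemberSubfamily x) ≤ 1 := by
  obtain ⟨b, hb, c, hc, hbc⟩ := one_lt_card.1 hx
  simp only [mem_filter, singleton_subset_iff] at hb hc
  have hcard : 3 ≤ #(b ∪ c) := by
    have hssub : b ⊂ b ∪ c := left_lt_sup.2 fun hcb ↦
      hbc (eq_of_subset_of_card_le hcb (by rw [hB hb.1, hB hc.1])).symm
    have hlt := card_lt_card hssub
    rwa [hB hb.1] at hlt
  have hdet : ∀ a ∈ A.nonMemberSubfamily x, (b ∪ c).erase x = a := by
    intro a ha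
    obtain ⟨ha, hxa⟩ := mem_nonMemberSubfamily.1 ha
    refine eq_of_subset_of_card_le ?_ ?_
    · rw [erase_union_distrib]
      exact union_subset (erase_subset_of_not_disjoint (hB hb.1) hb.2 hxa (h a ha b hb.1))
        (erase_subset_of_not_disjoint (hB hc.1) hc.2 hxa (h a ha c hc.1))
    · rw [card_erase_of_mem (mem_union_left c hb.2), hA ha]
      omega
  exact card_le_one.2 fun a ha a' ha' ↦ (hdet a ha).symm.trans (hdet a' ha')

theorem CrossIntersecting.card_le_codegree_add_one (h : CrossIntersecting A B)
    (hA : (A : Set (Finset V)).Sized 2) (hB : (B : Set (Finset V)).Sized 2)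
    (hx : 2 ≤ codegree A {x}) (hB3 : 3 ≤ #B) : #A ≤ codegree A {x} + 1 := by
  have hB1 := h.symm.card_nonMemberSubfamily_le_one hB hA hx
  have hBsplit := card_nonMemberSubfamily_add_codegree B x
  have hA1 := h.card_nonMemberSubfamily_le_one hA hB (x := x) (by omega)
  have hAsplit := card_nonMemberSubfamily_add_codegree A x
  omega

theorem CrossIntersecting.card_add_card_le_seven_of_card_le (h : CrossIntersecting A B)
    (hA : (A : Set (Finset V)).Sized 2) (hB : (B : Set (Finset V)).Sized 2) (hB0 : B.Nonempty)
    (hdA : ∀ x, codegree A {x} ≤ 3) (hdB : ∀ x, codegree B {x} ≤ 3) (hBA : #B ≤ #A) :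
    #A + #B ≤ 7 := by
  obtain ⟨b, hb⟩ := hB0
  have hcover : ∀ c, (∀ x ∈ b, codegree A {x} ≤ c) → #A ≤ 2 * c := fun c hc ↦ by
    rw [← hB hb]
    exact card_le_card_mul (fun a ha ↦ h a ha b hb) hc
  by_cases hstar : ∃ x, 3 ≤ codegree A {x}
  · obtain ⟨x, hx⟩ := hstar
    have hBx : #(B.nonMemberSubfamily x) = 0 := by
      rw [card_eq_zero, eq_empty_iff_forall_notMem]
      intro b' hb'
      obtain ⟨hb', hxb'⟩ := mem_nonMemberSubfamily.1 hb'
      exact hxb' (h.mem_of_card_lt_codegree hA hb' (by rw [hB hb']; exact hx))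
    have hBsplit := card_nonMemberSubfamily_add_codegree B x
    have hAsplit := card_nonMemberSubfamily_add_codegree A x
    have hA6 := hcover 3 fun x _ ↦ hdA x
    have hAx := hdA x
    have hBx3 := hdB x
    by_cases hB2 : 2 ≤ codegree B {x}
    · have hA1 := h.card_nonMemberSubfamily_le_one hA hB hB2
      omega
    · omega
  · push Not at hstar
    have hA4 := hcover 2 fun x _ ↦ by have := hstar x; omega
    by_contra! h8
    obtain ⟨u, -, hu⟩ : ∃ u ∈ b, 2 ≤ codegree A {u} := by
      by_contra! hlt
      have hA2 := hcover 1 fun x hx ↦ by have := hlt x hx; omega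
      omega
    have hAu := h.card_le_codegree_add_one hA hB hu (by omega)
    have hu2 := hstar u
    omega

theorem CrossIntersecting.card_add_card_le_seven (h : CrossIntersecting A B)
    (hA : (A : Set (Finset V)).Sized 2) (hB : (B : Set (Finset V)).Sized 2)
    (hA0 : A.Nonempty) (hB0 : B.Nonempty)
    (hdA : ∀ x, codegree A {x} ≤ 3) (hdB : ∀ x, codegree B {x} ≤ 3) : #A + #B ≤ 7 := by
  rcases le_total #B #A with hBA | hAB
  · exact h.card_add_card_le_seven_of_card_le hA hB hB0 hdA hdB hBA
  · rw [add_comm]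
    exact h.symm.card_add_card_le_seven_of_card_le hB hA hA0 hdB hdA hAB

theorem CrossIntersecting.card_le_four_of_transversal (h : CrossIntersecting A B)
    (hA : (A : Set (Finset V)).Sized 2) (hB : (B : Set (Finset V)).Sized 2) (hB0 : B.Nonempty)
    (hT : #T = 3) (hAT : ∀ a ∈ A, ¬Disjoint a T) (hBT : ∀ b ∈ B, ¬Disjoint b T)
    (hdA : ∀ x ∈ T, codegree A {x} ≤ 2) : #A ≤ 4 := by
  obtain ⟨b, hb⟩ := hB0
  obtain ⟨x, hxb, hxT⟩ := not_disjoint_iff.1 (hBT b hb)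
  obtain ⟨z, hzb, hzx⟩ := exists_mem_ne (by rw [hB hb]; norm_num) x
  have hbxz : {x, z} = b := eq_of_subset_of_card_le (by grind) (by grind [hB hb])
  have hzA : ∀ a ∈ A.nonMemberSubfamily x, {z} ⊆ a := by
    intro a ha
    obtain ⟨ha, hxa⟩ := mem_nonMemberSubfamily.1 ha
    obtain ⟨y, hya, hyb⟩ := not_disjoint_iff.1 (h a ha b hb)
    grind
  have hdz : codegree (A.nonMemberSubfamily x) {z} ≤ 2 := by
    by_cases hzT : z ∈ T
    · exact (codegree_le_codegree fun a ha hza ↦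
        ⟨(mem_nonMemberSubfamily.1 ha).1, hza⟩).trans (hdA z hzT)
    · rw [← (by rw [card_erase_of_mem hxT, hT] : #(T.erase x) = 2)]
      refine codegree_le_card (hA.mono fun a ha ↦ (mem_nonMemberSubfamily.1 ha).1)
        (disjoint_singleton_right.2 fun hz ↦ hzT (mem_of_mem_erase hz)) fun a ha _ ↦ ?_
      obtain ⟨ha, hxa⟩ := mem_nonMemberSubfamily.1 ha
      obtain ⟨y, hya, hyT⟩ := not_disjoint_iff.1 (hAT a ha)
      exact not_disjoint_iff.2 ⟨y, hya, mem_erase.2 ⟨fun hyx ↦ hxa (hyx ▸ hya), hyT⟩⟩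
  have hAx : #(A.nonMemberSubfamily x) ≤ codegree (A.nonMemberSubfamily x) {z} := by
    rw [← codegree_empty]
    exact codegree_le_codegree fun a ha _ ↦ ⟨ha, hzA a ha⟩
  have hsplit := card_nonMemberSubfamily_add_codegree A x
  have hdx := hdA x hxT
  omega

theorem CrossIntersecting.card_add_card_le_six_of_four_le_card (h : CrossIntersecting A B)
    (hA : (A : Set (Finset V)).Sized 2) (hB : (B : Set (Finset V)).Sized 2)
    (hT : #T = 3) (hAT : ∀ a ∈ A, ¬Disjoint a T) (hBT : ∀ b ∈ B, ¬Disjoint b T)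
    (hdA : ∀ x ∈ T, codegree A {x} ≤ 2) (hA4 : 4 ≤ #A) : #A + #B ≤ 6 := by
  have hcover : ∀ c, (∀ x ∈ T, codegree A {x} ≤ c) → #A ≤ 3 * c := fun c hc ↦ by
    rw [← hT]
    exact card_le_card_mul hAT hc
  rcases B.eq_empty_or_nonempty with rfl | hB0
  · simpa using hcover 2 hdA
  have hA4' := h.card_le_four_of_transversal hA hB hB0 hT hAT hBT hdA
  by_contra! h7
  obtain ⟨u, huT, hu⟩ : ∃ u ∈ T, 2 ≤ codegree A {u} := by
    by_contra! hlt
    have hA3 := hcover 1 fun x hx ↦ by have := hlt x hx; omega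
    omega
  have hAu := h.card_le_codegree_add_one hA hB hu (by omega)
  have hu2 := hdA u huT
  omega

theorem CrossIntersecting.card_add_card_le_six (h : CrossIntersecting A B)
    (hA : (A : Set (Finset V)).Sized 2) (hB : (B : Set (Finset V)).Sized 2)
    (hT : #T = 3) (hAT : ∀ a ∈ A, ¬Disjoint a T) (hBT : ∀ b ∈ B, ¬Disjoint b T)
    (hdA : ∀ x ∈ T, codegree A {x} ≤ 2) (hdB : ∀ x ∈ T, codegree B {x} ≤ 2) : #A + #B ≤ 6 := by
  by_cases hA4 : 4 ≤ #A
  · exact h.card_add_card_le_six_of_four_le_card hA hB hT hAT hBT hdA hA4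
  by_cases hB4 : 4 ≤ #B
  · rw [add_comm]
    exact h.symm.card_add_card_le_six_of_four_le_card hB hA hT hBT hAT hdB hB4
  omega

/-! ### Intersecting families of triples -/

/-- The link of `p` in the subfamily of those members of `F` that avoid `q`. For an intersecting
family, exchanging `p` and `q` gives a cross-intersecting pair of links. -/
def linkAvoiding (F : Finset (Finset V)) (p q : V) : Finset (Finset V) :=
  (F.nonMemberSubfamily q).memberSubfamily p

theorem mem_linkAvoiding : a ∈ linkAvoiding F p q ↔ (insert p a ∈ F ∧ q ∉ insert p a) ∧ p ∉ a := by
  rw [linkAvoiding, mem_memberSubfamily, mem_nonMemberSubfamily]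

theorem sized_linkAvoiding (hF : (F : Set (Finset V)).Sized (k + 1)) :
    (linkAvoiding F p q : Set (Finset V)).Sized k :=
  sized_memberSubfamily (hF.mono fun _ hf ↦ (mem_nonMemberSubfamily.1 hf).1)

theorem linkAvoiding_nonempty (hf : f ∈ F) (hp : p ∈ f) (hq : q ∉ f) :
    (linkAvoiding F p q).Nonempty :=
  ⟨f.erase p, by simpa [mem_linkAvoiding, insert_erase hp] using ⟨hf, hq⟩⟩

theorem crossIntersecting_linkAvoiding (hF : (F : Set (Finset V)).Intersecting) :
    CrossIntersecting (linkAvoiding F p q) (linkAvoiding F q p) := by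
  intro a ha b hb
  obtain ⟨⟨ha, hqa⟩, -⟩ := mem_linkAvoiding.1 ha
  obtain ⟨⟨hb, hpb⟩, -⟩ := mem_linkAvoiding.1 hb
  obtain ⟨y, hya, hyb⟩ := not_disjoint_iff.1 (hF ha hb)
  refine not_disjoint_iff.2 ⟨y, mem_of_mem_insert_of_ne hya ?_, mem_of_mem_insert_of_ne hyb ?_⟩
  · exact fun hyp ↦ hpb (hyp ▸ hyb)
  · exact fun hyq ↦ hqa (hyq ▸ hya)

theorem not_disjoint_of_mem_linkAvoiding (hF : (F : Set (Finset V)).Intersecting)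
    (ha : a ∈ linkAvoiding F p q) (hD : D ∈ F) (hp : p ∉ D) : ¬Disjoint a D := by
  intro had
  exact hF (mem_linkAvoiding.1 ha).1.1 hD (disjoint_insert_left.2 ⟨hp, had⟩)

theorem codegree_linkAvoiding_self : codegree (linkAvoiding F p q) {p} = 0 := by
  rw [codegree_singleton, card_eq_zero, filter_eq_empty_iff]
  exact fun a ha ↦ (mem_linkAvoiding.1 ha).2

theorem codegree_linkAvoiding_add (hpx : p ≠ x) :
    codegree (linkAvoiding F p q) {x} + codegree F {q, p, x} = codegree F {p, x} := by
  rw [linkAvoiding, codegree_memberSubfamily (by simpa using hpx),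
    codegree_nonMemberSubfamily_add]

theorem codegree_linkAvoiding_le (hF : ∀ T, #T = 2 → codegree F T ≤ c) :
    codegree (linkAvoiding F p q) {x} ≤ c := by
  rcases eq_or_ne p x with rfl | hpx
  · simp [codegree_linkAvoiding_self]
  · have hadd := codegree_linkAvoiding_add (F := F) (q := q) hpx
    have hle := hF {p, x} (card_pair hpx)
    omega

theorem card_eq_codegree_pair_add (F : Finset (Finset V)) (p q : V) :
    #F = codegree F {p, q} + (#(linkAvoiding F p q) + #(linkAvoiding F q p)) +
      #((F.nonMemberSubfamily p).nonMemberSubfamily q) := by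
  have hp := card_nonMemberSubfamily_add_codegree F p
  have hq := card_nonMemberSubfamily_add_codegree (F.nonMemberSubfamily p) q
  have hpq' := codegree_nonMemberSubfamily_add F q {p}
  rw [pair_comm] at hpq'
  rw [linkAvoiding, linkAvoiding, card_memberSubfamily, card_memberSubfamily]
  omega

theorem card_le_ten_of_pair_cover (hF : (F : Set (Finset V)).Sized 3)
    (hint : (F : Set (Finset V)).Intersecting) (hcover : ∀ f ∈ F, p ∈ f ∨ q ∈ f)
    (hp : ∃ f ∈ F, p ∉ f) (hq : ∃ f ∈ F, q ∉ f) (hpair : ∀ T, #T = 2 → codegree F T ≤ 3) :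
    #F ≤ 10 := by
  obtain ⟨f, hf, hpf⟩ := hp
  obtain ⟨g, hg, hqg⟩ := hq
  have hqf := (hcover f hf).resolve_left hpf
  have hpg := (hcover g hg).resolve_right hqg
  have hpq : p ≠ q := fun hpq ↦ hpf (hpq ▸ hqf)
  have hmissed : #((F.nonMemberSubfamily p).nonMemberSubfamily q) = 0 := by
    rw [card_eq_zero, eq_empty_iff_forall_notMem]
    intro h hh
    simp only [mem_nonMemberSubfamily] at hh
    exact (hcover h hh.1.1).elim hh.1.2 hh.2
  have hlinks := (crossIntersecting_linkAvoiding (p := p) (q := q) hint).card_add_card_le_seven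
    (sized_linkAvoiding hF) (sized_linkAvoiding hF) (linkAvoiding_nonempty hg hpg hqg)
    (linkAvoiding_nonempty hf hqf hpf) (fun _ ↦ codegree_linkAvoiding_le hpair)
    fun _ ↦ codegree_linkAvoiding_le hpair
  have hcodeg := hpair {p, q} (card_pair hpq)
  rw [card_eq_codegree_pair_add F p q]
  omega

theorem card_le_codegree_pair_add_six (hF : (F : Set (Finset V)).Sized 3)
    (hint : (F : Set (Finset V)).Intersecting) (hD : D ∈ F) (hpD : p ∉ D)
    (hqD : q ∉ D) (hp : ∀ x ∈ D, codegree (linkAvoiding F p q) {x} ≤ 2)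
    (hq : ∀ x ∈ D, codegree (linkAvoiding F q p) {x} ≤ 2) :
    #F ≤ codegree F {p, q} + 6 + #((F.nonMemberSubfamily p).nonMemberSubfamily q) := by
  have hlinks := (crossIntersecting_linkAvoiding (p := p) (q := q) hint).card_add_card_le_six
    (sized_linkAvoiding hF) (sized_linkAvoiding hF) (hF hD)
    (fun _ ha ↦ not_disjoint_of_mem_linkAvoiding hint ha hD hpD)
    (fun _ hb ↦ not_disjoint_of_mem_linkAvoiding hint hb hD hqD) hp hq
  rw [card_eq_codegree_pair_add F p q]
  omega

theorem mem_of_insert_pair_mem (hint : (F : Set (Finset V)).Intersecting)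
    (hy : {y, p, q} ∈ F) (hD : D ∈ F) (hpD : p ∉ D) (hqD : q ∉ D) : y ∈ D := by
  obtain ⟨z, hz, hzD⟩ := not_disjoint_iff.1 (hint hy hD)
  grind

theorem codegree_pair_le_three (hF : (F : Set (Finset V)).Sized 3)
    (hint : (F : Set (Finset V)).Intersecting) (hpq : p ≠ q) (hD : D ∈ F) (hpD : p ∉ D)
    (hqD : q ∉ D) : codegree F {p, q} ≤ 3 := by
  rw [← hF hD]
  exact codegree_le_card (by rwa [card_pair hpq]) (by simp [hpD, hqD]) fun f hf _ ↦ hint hf hD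

theorem card_le_ten_of_codegree_pair_eq_three (hF : (F : Set (Finset V)).Sized 3)
    (hint : (F : Set (Finset V)).Intersecting) (hpair : ∀ T, #T = 2 → codegree F T ≤ 3)
    (hpq : p ≠ q) (h3 : codegree F {p, q} = 3) (hD : D ∈ F) (hpD : p ∉ D) (hqD : q ∉ D) :
    #F ≤ 10 := by
  have hins : ∀ y ∈ D, {y, p, q} ∈ F := fun y hy ↦
    insert_mem_of_card_le_codegree (by rwa [card_pair hpq]) (by simp [hpD, hqD])
      (fun f hf _ ↦ hint hf hD) (by rw [hF hD, h3]) hy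
  have hdeg : ∀ {u v x : V}, {x, u, v} ∈ F → u ≠ x → codegree (linkAvoiding F u v) {x} ≤ 2 := by
    intro u v x hx hux
    have hadd := codegree_linkAvoiding_add (F := F) (q := v) hux
    have hpos : 0 < codegree F {v, u, x} := codegree_pos.2 ⟨_, hx, by grind⟩
    have hle := hpair {u, x} (card_pair hux)
    omega
  have hmissed : #((F.nonMemberSubfamily p).nonMemberSubfamily q) ≤ 1 := by
    refine card_le_one_iff_subset_singleton.2 ⟨D, fun D' hD' ↦ mem_singleton.2 ?_⟩
    simp only [mem_nonMemberSubfamily] at hD'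
    refine (eq_of_subset_of_card_le (fun y hy ↦ ?_) (by rw [hF hD, hF hD'.1.1])).symm
    exact mem_of_insert_pair_mem hint (hins y hy) hD'.1.1 hD'.1.2 hD'.2
  have hle := card_le_codegree_pair_add_six hF hint hD hpD hqD
    (fun x hx ↦ hdeg (hins x hx) (ne_of_mem_of_not_mem hx hpD).symm)
    fun x hx ↦ hdeg (by rw [pair_comm]; exact hins x hx) (ne_of_mem_of_not_mem hx hqD).symm
  omega

theorem card_le_ten_of_codegree_pair_eq_two (hF : (F : Set (Finset V)).Sized 3)
    (hint : (F : Set (Finset V)).Intersecting) (hpair : ∀ T, #T = 2 → codegree F T ≤ 2)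
    (hpq : p ≠ q) (h2 : codegree F {p, q} = 2) (hD : D ∈ F) (hpD : p ∉ D) (hqD : q ∉ D) :
    #F ≤ 10 := by
  obtain ⟨f, g, hfg, hfilter⟩ := card_eq_two.1 h2
  have hexists : ∀ h ∈ ({f, g} : Finset (Finset V)), ∃ y, insert y {p, q} = h ∧ h ∈ F := by
    intro h hh
    rw [← hfilter, mem_filter] at hh
    obtain ⟨y, -, hy⟩ := exists_eq_insert_iff.2 ⟨hh.2, by rw [card_pair hpq, hF hh.1]⟩
    exact ⟨y, hy, hh.1⟩
  obtain ⟨y, rfl, hy⟩ := hexists f (by simp)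
  obtain ⟨z, rfl, hz⟩ := hexists g (by simp)
  have hyz : y ≠ z := fun hyz ↦ hfg (by rw [hyz])
  have hmissed : #((F.nonMemberSubfamily p).nonMemberSubfamily q) ≤ 2 := by
    refine le_trans ?_ (hpair {y, z} (card_pair hyz))
    rw [← codegree_empty]
    refine codegree_le_codegree fun D' hD' _ ↦ ?_
    simp only [mem_nonMemberSubfamily] at hD'
    exact ⟨hD'.1.1, insert_subset (mem_of_insert_pair_mem hint hy hD'.1.1 hD'.1.2 hD'.2)
      (singleton_subset_iff.2 (mem_of_insert_pair_mem hint hz hD'.1.1 hD'.1.2 hD'.2))⟩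
  have hle := card_le_codegree_pair_add_six hF hint hD hpD hqD
    (fun _ _ ↦ codegree_linkAvoiding_le hpair) fun _ _ ↦ codegree_linkAvoiding_le hpair
  omega

theorem card_le_nine_of_codegree_pair_le_one (hF : (F : Set (Finset V)).Sized 3)
    (hint : (F : Set (Finset V)).Intersecting) (hmissed : ∀ x, ∃ f ∈ F, x ∉ f)
    (hpair : ∀ T, #T = 2 → codegree F T ≤ 1) : #F ≤ 9 := by
  have hdeg : ∀ x, codegree F {x} ≤ 3 := by
    intro x
    obtain ⟨D, hD, hxD⟩ := hmissed x
    rw [← hF hD, ← mul_one #D]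
    exact codegree_le_card_mul (fun f hf _ ↦ hint hf hD) fun y hy ↦
      hpair {y, x} (card_pair (ne_of_mem_of_not_mem hy hxD))
  rcases F.eq_empty_or_nonempty with rfl | ⟨D, hD⟩
  · simp
  · have hle := card_le_card_mul (fun f hf ↦ hint hf hD) fun x _ ↦ hdeg x
    rwa [hF hD] at hle

theorem card_le_ten_of_forall_pair_missed (hF : (F : Set (Finset V)).Sized 3)
    (hint : (F : Set (Finset V)).Intersecting) (hmissed : ∀ p q, ∃ f ∈ F, p ∉ f ∧ q ∉ f) :
    #F ≤ 10 := by
  have hpair : ∀ T, #T = 2 → codegree F T ≤ 3 := by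
    intro T hT
    obtain ⟨p, q, hpq, rfl⟩ := card_eq_two.1 hT
    obtain ⟨D, hD, hpD, hqD⟩ := hmissed p q
    exact codegree_pair_le_three hF hint hpq hD hpD hqD
  by_cases h3 : ∃ T, #T = 2 ∧ codegree F T = 3
  · obtain ⟨T, hT, h3⟩ := h3
    obtain ⟨p, q, hpq, rfl⟩ := card_eq_two.1 hT
    obtain ⟨D, hD, hpD, hqD⟩ := hmissed p q
    exact card_le_ten_of_codegree_pair_eq_three hF hint hpair hpq h3 hD hpD hqD
  push Not at h3
  have hpair2 : ∀ T, #T = 2 → codegree F T ≤ 2 := fun T hT ↦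
    Nat.le_of_lt_succ (lt_of_le_of_ne (hpair T hT) (h3 T hT))
  by_cases h2 : ∃ T, #T = 2 ∧ codegree F T = 2
  · obtain ⟨T, hT, h2⟩ := h2
    obtain ⟨p, q, hpq, rfl⟩ := card_eq_two.1 hT
    obtain ⟨D, hD, hpD, hqD⟩ := hmissed p q
    exact card_le_ten_of_codegree_pair_eq_two hF hint hpair2 hpq h2 hD hpD hqD
  push Not at h2
  refine (card_le_nine_of_codegree_pair_le_one hF hint (fun x ↦ ?_) fun T hT ↦
    Nat.le_of_lt_succ (lt_of_le_of_ne (hpair2 T hT) (h2 T hT))).trans (by norm_num)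
  obtain ⟨f, hf, hxf, -⟩ := hmissed x x
  exact ⟨f, hf, hxf⟩

theorem exists_forall_mem_or_exists_four_le_codegree (hF : (F : Set (Finset V)).Sized 3)
    (hint : (F : Set (Finset V)).Intersecting) (hcard : 11 ≤ #F) :
    (∃ v, ∀ f ∈ F, v ∈ f) ∨ ∃ T, #T = 2 ∧ 4 ≤ codegree F T := by
  by_contra! h
  obtain ⟨hstar, hpair⟩ := h
  suffices #F ≤ 10 by omega
  by_cases hcover : ∃ p q, ∀ f ∈ F, p ∈ f ∨ q ∈ f
  · obtain ⟨p, q, hcover⟩ := hcover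
    exact card_le_ten_of_pair_cover hF hint hcover (hstar p) (hstar q)
      fun T hT ↦ Nat.le_of_lt_succ (hpair T hT)
  · push Not at hcover
    exact card_le_ten_of_forall_pair_missed hF hint hcover

/-! ### Heavy sets -/

/-- `T` lies in more members of `H` than it has elements. In a `(#T + 1)`-uniform family, no set of
`#T` vertices outside `T` can then meet all members containing `T`. -/
def Heavy (H : Finset (Finset V)) (T : Finset V) : Prop := #T < codegree H T

theorem Heavy.two_le_card_inter (hT : Heavy H T) (hH : (H : Set (Finset V)).Sized (#T + 1))
    (hfree : Set.IsIntersectingOf {1}ᶜ (H : Set (Finset V))) (hf : f ∈ H) (hfT : ¬Disjoint f T) :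
    2 ≤ #(f ∩ T) := by
  by_contra! hlt
  have hpos : 0 < #(f ∩ T) := card_pos.2 (not_disjoint_iff_nonempty_inter.1 hfT)
  have hTpos : 0 < #T := hpos.trans_le (card_le_card inter_subset_right)
  have hsdiff : #(f \ T) + #(f ∩ T) = #T + 1 := by rw [card_sdiff_add_card_inter, hH hf]
  have hmeet : ∀ e ∈ H, T ⊆ e → ¬Disjoint e (f \ T) := by
    intro e he hTe hdisj
    have hinter : e ∩ f = f ∩ T := by grind [disjoint_left]
    have hef : e ≠ f := by
      rintro rfl
      have hcard := hH he
      rw [inter_self] at hinter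
      rw [← hinter] at hlt
      omega
    exact hfree he hf hef (by rw [Set.mem_singleton_iff, hinter]; omega)
  have hle := codegree_le_card hH sdiff_disjoint hmeet
  have hheavy : #T < codegree H T := hT
  omega

theorem Heavy.two_le_card_inter_of_heavy (hT : Heavy H T) (hT' : Heavy H T') (hcard : #T' = #T)
    (hH : (H : Set (Finset V)).Sized (#T + 1))
    (hfree : Set.IsIntersectingOf {1}ᶜ (H : Set (Finset V))) (h : ¬Disjoint T T') :
    2 ≤ #(T ∩ T') := by
  by_contra! hlt
  have hmeet : ∀ e ∈ H, T' ⊆ e → ¬Disjoint e (T \ T') := by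
    intro e he hTe hdisj
    have hinter : e ∩ T = T ∩ T' := by grind [disjoint_left]
    have h2 := hT.two_le_card_inter hH hfree he fun hd ↦ h (hd.mono_left hTe).symm
    rw [hinter] at h2
    omega
  have hle := codegree_le_card (by rwa [hcard]) sdiff_disjoint hmeet
  have hsub : #(T \ T') ≤ #T := card_le_card sdiff_subset
  have hheavy : #T' < codegree H T' := hT'
  omega

theorem exists_erase_subset_of_card_le_card_inter_add_one (hT : T.Nonempty)
    (h : #T ≤ #(f ∩ T) + 1) : ∃ c ∈ T, T.erase c ⊆ f := by
  have hsdiff : #(T \ f) ≤ 1 := by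
    have hadd := card_sdiff_add_card_inter T f
    rw [inter_comm] at hadd
    omega
  rcases (T \ f).eq_empty_or_nonempty with hempty | ⟨c, hc⟩
  · obtain ⟨c, hc⟩ := hT
    exact ⟨c, hc, (erase_subset c T).trans (sdiff_eq_empty_iff_subset.1 hempty)⟩
  · refine ⟨c, (mem_sdiff.1 hc).1, fun y hy ↦ ?_⟩
    by_contra hyf
    exact ne_of_mem_erase hy (card_le_one.1 hsdiff y (mem_sdiff.2 ⟨mem_of_mem_erase hy, hyf⟩) c hc)

theorem Heavy.exists_heavy_insert_erase (hT : Heavy H T) (hT3 : #T = 3)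
    (hH : (H : Set (Finset V)).Sized 4) (hfree : Set.IsIntersectingOf {1}ᶜ (H : Set (Finset V)))
    (hr : r ∉ T) (hrT : insert r T ∈ H) (hdeg : 10 ≤ codegree H {r}) :
    ∃ c ∈ T, Heavy H (insert r (T.erase c)) := by
  by_contra! hlight
  have hcover : {f ∈ H | {r} ⊆ f} ⊆
      T.biUnion fun c ↦ {f ∈ H | insert r (T.erase c) ⊆ f} := by
    intro f hf
    obtain ⟨hf, hrf⟩ := mem_filter.1 hf
    rw [singleton_subset_iff] at hrf
    have hfT : ¬Disjoint f T := by
      intro hd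
      have hinter : f ∩ insert r T = {r} := by
        rw [inter_insert_of_mem hrf, disjoint_iff_inter_eq_empty.1 hd, insert_empty_eq]
      refine hfree hf hrT ?_ (by rw [Set.mem_singleton_iff, hinter, card_singleton])
      rintro rfl
      simp_all
    have h2 := hT.two_le_card_inter (by rwa [hT3]) hfree hf hfT
    obtain ⟨c, hc, hcf⟩ := exists_erase_subset_of_card_le_card_inter_add_one (f := f)
      (card_pos.1 (by omega : 0 < #T)) (by omega)
    exact mem_biUnion.2 ⟨c, hc, mem_filter.2 ⟨hf, insert_subset hrf hcf⟩⟩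
  have hbound : ∀ c ∈ T, #{f ∈ H | insert r (T.erase c) ⊆ f} ≤ 3 := by
    intro c hc
    refine (not_lt.1 (hlight c hc)).trans_eq ?_
    rw [card_insert_of_notMem fun h ↦ hr (mem_of_mem_erase h), card_erase_of_mem hc, hT3]
  have hle := (card_le_card hcover).trans (card_biUnion_le_card_mul T _ 3 hbound)
  have hdeg' : 10 ≤ #{f ∈ H | {r} ⊆ f} := hdeg
  omega

theorem Heavy.exists_forall_heavy_insert_erase (hT : Heavy H T) (hT3 : #T = 3)
    (hH : (H : Set (Finset V)).Sized 4) (hfree : Set.IsIntersectingOf {1}ᶜ (H : Set (Finset V)))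
    (hdeg : ∀ v, 10 ≤ codegree H {v}) :
    ∃ c ∈ T, ∀ s ∉ T, insert s T ∈ H → Heavy H (insert s (T.erase c)) := by
  have hcard : ∀ {s c : V}, s ∉ T → c ∈ T → #(insert s (T.erase c)) = 3 := fun hs hc ↦ by
    rw [card_insert_of_notMem fun h ↦ hs (mem_of_mem_erase h), card_erase_of_mem hc, hT3]
  obtain ⟨e, he, hTe⟩ := codegree_pos.1 ((Nat.zero_le _).trans_lt hT)
  obtain ⟨r, hr, rfl⟩ := exists_eq_insert_iff.2 ⟨hTe, by rw [hT3, hH he]⟩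
  obtain ⟨c, hc, hheavy⟩ := hT.exists_heavy_insert_erase hT3 hH hfree hr he (hdeg r)
  refine ⟨c, hc, fun s hs hsT ↦ ?_⟩
  rcases eq_or_ne s r with rfl | hsr
  · exact hheavy
  obtain ⟨c', hc', hheavy'⟩ := hT.exists_heavy_insert_erase hT3 hH hfree hs hsT (hdeg s)
  suffices c' = c from this ▸ hheavy'
  by_contra hcc
  have hinter : insert r (T.erase c) ∩ insert s (T.erase c') = (T.erase c).erase c' := by grind
  have hcard1 : #((T.erase c).erase c') = 1 := by
    rw [card_erase_of_mem (mem_erase.2 ⟨hcc, hc'⟩), card_erase_of_mem hc, hT3]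
  have h2 := hheavy.two_le_card_inter_of_heavy hheavy' (by rw [hcard hr hc, hcard hs hc'])
    (by rwa [hcard hr hc]) hfree (by
      rw [not_disjoint_iff_nonempty_inter, hinter, ← card_pos, hcard1]
      exact Nat.one_pos)
  rw [hinter, hcard1] at h2
  omega

theorem Heavy.exists_pair_subset_of_not_disjoint (hT : Heavy H T) (hT3 : #T = 3)
    (hH : (H : Set (Finset V)).Sized 4) (hfree : Set.IsIntersectingOf {1}ᶜ (H : Set (Finset V)))
    (hdeg : ∀ v, 10 ≤ codegree H {v}) :
    ∃ d ⊆ T, #d = 2 ∧ ∀ f ∈ H, ¬Disjoint f T → d ⊆ f := by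
  obtain ⟨c, hc, hheavy⟩ := hT.exists_forall_heavy_insert_erase hT3 hH hfree hdeg
  have hd2 : #(T.erase c) = 2 := by rw [card_erase_of_mem hc, hT3]
  refine ⟨T.erase c, erase_subset c T, hd2, fun f hf hfT ↦ ?_⟩
  by_contra hdf
  have h2 := hT.two_le_card_inter (by rwa [hT3]) hfree hf hfT
  have hfd : #(f ∩ T.erase c) < 2 := hd2 ▸ card_lt_card
    (ssubset_of_subset_of_ne inter_subset_right fun h ↦ hdf (inter_eq_right.1 h))
  have hfd' : ¬Disjoint f (T.erase c) := by
    rw [disjoint_iff_inter_eq_empty, ← card_eq_zero, inter_erase]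
    have hpred := pred_card_le_card_erase (s := f ∩ T) (a := c)
    omega
  have hmem : ∀ s ∉ T, insert s T ∈ H → s ∈ f := by
    intro s hs hsT
    by_contra hsf
    have hs3 : #(insert s (T.erase c)) = 3 := by
      rw [card_insert_of_notMem fun h ↦ hs (mem_of_mem_erase h), hd2]
    have hs2 := (hheavy s hs hsT).two_le_card_inter (by rwa [hs3]) hfree hf
      fun hd ↦ hfd' (hd.mono_right (subset_insert s _))
    rw [inter_insert_of_notMem hsf] at hs2
    omega
  have hmeet : ∀ e ∈ H, T ⊆ e → ¬Disjoint e (f \ T) := by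
    intro e he hTe
    obtain ⟨s, hs, rfl⟩ := exists_eq_insert_iff.2 ⟨hTe, by rw [hT3, hH he]⟩
    exact not_disjoint_iff.2 ⟨s, mem_insert_self s T, mem_sdiff.2 ⟨hmem s hs he, hs⟩⟩
  have hle := codegree_le_card (by rwa [hT3]) sdiff_disjoint hmeet
  have hsdiff := card_sdiff_add_card_inter f T
  have hT' : #T < codegree H T := hT
  rw [hH hf] at hsdiff
  omega

theorem intersecting_memberSubfamily (hH : (H : Set (Finset V)).Sized (k + 2))
    (hfree : Set.IsIntersectingOf {1}ᶜ (H : Set (Finset V))) (v : V) :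
    (H.memberSubfamily v : Set (Finset V)).Intersecting := by
  intro a ha b hb hab
  have hacard : #a = k + 1 := sized_memberSubfamily hH ha
  obtain ⟨ha, hva⟩ := mem_memberSubfamily.1 ha
  obtain ⟨hb, -⟩ := mem_memberSubfamily.1 hb
  refine hfree ha hb (fun heq ↦ ?_) ?_
  · have hsub : a ⊆ b := fun y hy ↦
      mem_of_mem_insert_of_ne (heq ▸ mem_insert_of_mem hy) (ne_of_mem_of_not_mem hy hva)
    simp [disjoint_self.1 (hab.mono_right hsub)] at hacard
  · rw [Set.mem_singleton_iff, ← insert_inter_distrib, disjoint_iff_inter_eq_empty.1 hab,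
      insert_empty_eq, card_singleton]

theorem exists_ne_forall_mem_of_mem (hH : (H : Set (Finset V)).Sized 4)
    (hfree : Set.IsIntersectingOf {1}ᶜ (H : Set (Finset V))) (hdeg : ∀ v, 11 ≤ codegree H {v})
    (v : V) : ∃ w ≠ v, ∀ f ∈ H, v ∈ f → w ∈ f := by
  have hcard : 11 ≤ #(H.memberSubfamily v) := by
    rw [card_memberSubfamily]
    exact hdeg v
  rcases exists_forall_mem_or_exists_four_le_codegree (sized_memberSubfamily hH)
    (intersecting_memberSubfamily hH hfree v) hcard with ⟨w, hw⟩ | ⟨T, hT, h4⟩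
  · have hlink : ∀ f ∈ H, v ∈ f → w ∈ f.erase v := fun f hf hvf ↦
      hw _ (mem_memberSubfamily.2 ⟨by rwa [insert_erase hvf], notMem_erase v f⟩)
    obtain ⟨f, hf, hvf⟩ := codegree_pos.1 (by have := hdeg v; omega : 0 < codegree H {v})
    exact ⟨w, ne_of_mem_erase (hlink f hf (singleton_subset_iff.1 hvf)),
      fun f hf hvf ↦ mem_of_mem_erase (hlink f hf hvf)⟩
  · have hvT : v ∉ T := by
      obtain ⟨f, hf, hTf⟩ := codegree_pos.1 (by omega : 0 < codegree (H.memberSubfamily v) T)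
      exact fun hvT ↦ (mem_memberSubfamily.1 hf).2 (hTf hvT)
    have hT3 : #(insert v T) = 3 := by rw [card_insert_of_notMem hvT, hT]
    have hheavy : Heavy H (insert v T) := by
      rw [Heavy, hT3, ← codegree_memberSubfamily hvT]
      exact h4
    obtain ⟨d, -, hd, hdf⟩ := hheavy.exists_pair_subset_of_not_disjoint hT3 hH hfree
      fun v ↦ (by norm_num : 10 ≤ 11).trans (hdeg v)
    obtain ⟨w, hwd, hwv⟩ := exists_mem_ne (by omega : 1 < #d) v
    exact ⟨w, hwv, fun f hf hvf ↦
      hdf f hf (not_disjoint_iff.2 ⟨v, hvf, mem_insert_self v T⟩) hwd⟩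

/-! ### Intersections of edges -/

theorem card_inter_eq_two_or_three (hH : (H : Set (Finset V)).Sized 4)
    (hfree : Set.IsIntersectingOf {1}ᶜ (H : Set (Finset V))) (he : e ∈ H) (hf : f ∈ H)
    (hfe : f ≠ e) (hef : (e ∩ f).Nonempty) : #(e ∩ f) = 2 ∨ #(e ∩ f) = 3 := by
  have hne1 : #(e ∩ f) ≠ 1 := hfree he hf hfe.symm
  have hpos := hef.card_pos
  have hlt : #(e ∩ f) < 4 := hH he ▸ card_lt_card
    (ssubset_of_subset_of_ne inter_subset_left fun h ↦
      hfe (eq_of_subset_of_card_le (inter_eq_left.1 h) (by rw [hH he, hH hf])).symm)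
  omega

theorem codegree_singleton_le_choose (hH : (H : Set (Finset V)).Sized (k + 1)) (hxe : x ∉ e)
    (hinter : ∀ f ∈ H, x ∈ f → #(e ∩ f) = k) : codegree H {x} ≤ (#e).choose k := by
  rw [← card_memberSubfamily, ← card_powersetCard]
  refine card_le_card fun a ha ↦ ?_
  have hak : #a = k := sized_memberSubfamily hH ha
  have hcard := hinter _ (mem_memberSubfamily.1 ha).1 (mem_insert_self x a)
  rw [inter_insert_of_notMem hxe] at hcard
  have hea : e ∩ a = a := eq_of_subset_of_card_le inter_subset_right (by rw [hak, hcard])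
  exact mem_powersetCard.2 ⟨inter_eq_right.1 hea, hak⟩

theorem exists_card_inter_eq_two (hH : (H : Set (Finset V)).Sized 4)
    (hfree : Set.IsIntersectingOf {1}ᶜ (H : Set (Finset V)))
    (hpartner : ∀ v, ∃ w ≠ v, ∀ f ∈ H, v ∈ f → w ∈ f) (hdeg : ∀ v, 5 ≤ codegree H {v})
    (he : e ∈ H) : ∃ f ∈ H, f ≠ e ∧ #(e ∩ f) = 2 := by
  by_contra! hno
  have hthree : ∀ f ∈ H, f ≠ e → (e ∩ f).Nonempty → #(e ∩ f) = 3 := fun f hf hfe hef ↦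
    (card_inter_eq_two_or_three hH hfree he hf hfe hef).resolve_left (hno f hf hfe)
  obtain ⟨u, hue⟩ := card_pos.1 (by rw [hH he]; norm_num : 0 < #e)
  obtain ⟨f, hf, hfe⟩ := exists_mem_ne ((by norm_num : 1 < 5).trans_le (hdeg u)) e
  simp only [mem_filter, singleton_subset_iff] at hf
  have hef := hthree f hf.1 hfe ⟨u, mem_inter.2 ⟨hue, hf.2⟩⟩
  obtain ⟨x, hx⟩ : ∃ x, f \ e = {x} := by
    have hadd := card_sdiff_add_card_inter f e
    rw [inter_comm, hef, hH hf.1] at hadd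
    exact card_eq_one.1 (by omega)
  obtain ⟨hxf, hxe⟩ := mem_sdiff.1 (hx ▸ mem_singleton_self x : x ∈ f \ e)
  obtain ⟨w, hwx, hw⟩ := hpartner x
  have hwe : w ∈ e := by
    by_contra hwe
    exact hwx (mem_singleton.1 (hx ▸ mem_sdiff.2 ⟨hw f hf.1 hxf, hwe⟩))
  have hle : codegree H {x} ≤ (#e).choose 3 := codegree_singleton_le_choose hH hxe
    fun g hg hxg ↦ hthree g hg (fun hge ↦ hxe (hge ▸ hxg)) ⟨w, mem_inter.2 ⟨hwe, hw g hg hxg⟩⟩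
  rw [hH he] at hle
  exact absurd ((hdeg x).trans hle) (by decide)

theorem inter_subset_of_not_disjoint (hpartner : ∀ v, ∃ w ≠ v, ∀ f ∈ H, v ∈ f → w ∈ f)
    (he : e ∈ H) (hf : f ∈ H) (hef : #(e ∩ f) = 2) (hg : g ∈ H) (h : ¬Disjoint (e ∩ f) g) :
    e ∩ f ⊆ g := by
  obtain ⟨x, hx, hxg⟩ := not_disjoint_iff.1 h
  obtain ⟨hxe, hxf⟩ := mem_inter.1 hx
  obtain ⟨w, hwx, hw⟩ := hpartner x
  have hpair : {w, x} = e ∩ f := by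
    refine eq_of_subset_of_card_le (insert_subset ?_ (singleton_subset_iff.2 hx)) ?_
    · exact mem_inter.2 ⟨hw e he hxe, hw f hf hxf⟩
    · rw [hef, card_pair hwx]
  rw [← hpair]
  exact insert_subset (hw g hg hxg) (singleton_subset_iff.2 hxg)

theorem inter_eq_sdiff_or_inter_subset (hH : (H : Set (Finset V)).Sized 4)
    (hpartner : ∀ v, ∃ w ≠ v, ∀ f ∈ H, v ∈ f → w ∈ f) (he : e ∈ H) (hf : f ∈ H)
    (hef : #(e ∩ f) = 2) (hg : g ∈ H) (heg : 2 ≤ #(e ∩ g)) :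
    e ∩ g = e \ f ∨ e ∩ f ⊆ e ∩ g := by
  by_cases hd : Disjoint (e ∩ f) g
  · left
    refine eq_of_subset_of_card_le (fun y hy ↦ ?_) ?_
    · obtain ⟨hye, hyg⟩ := mem_inter.1 hy
      exact mem_sdiff.2 ⟨hye, fun hyf ↦ disjoint_left.1 hd (mem_inter.2 ⟨hye, hyf⟩) hyg⟩
    · have hadd := card_sdiff_add_card_inter e f
      rw [hef, hH he] at hadd
      omega
  · right
    exact subset_inter inter_subset_left (inter_subset_of_not_disjoint hpartner he hf hef hg hd)

theorem inter_eq_or_inter_eq_of_inter_eq_sdiff (hH : (H : Set (Finset V)).Sized 4)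
    (hpartner : ∀ v, ∃ w ≠ v, ∀ f ∈ H, v ∈ f → w ∈ f) (he : e ∈ H) (hf : f ∈ H)
    (hef : #(e ∩ f) = 2) (hg : g ∈ H) (heg : #(e ∩ g) = 2) (hfg : e ∩ g = e \ f)
    {h : Finset V} (hh : h ∈ H) (hhe : h ≠ e) (heh : 2 ≤ #(e ∩ h)) :
    e ∩ h = e ∩ f ∨ e ∩ h = e ∩ g := by
  rcases inter_eq_sdiff_or_inter_subset hH hpartner he hf hef hh heh with hsdiff | hfh
  · exact Or.inr (hsdiff.trans hfg.symm)
  rcases inter_eq_sdiff_or_inter_subset hH hpartner he hg heg hh heh with hsdiff | hgh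
  · rw [← sdiff_inter_self_left, hfg, sdiff_sdiff_self_left] at hsdiff
    exact Or.inl hsdiff
  have heh : e ⊆ h := by
    rw [← sdiff_union_inter e f, ← hfg]
    exact union_subset (hgh.trans inter_subset_right) (hfh.trans inter_subset_right)
  exact absurd (eq_of_subset_of_card_le heh (by rw [hH he, hH hh])).symm hhe

end

/-- In a `P^4_2`-free 4-uniform hypergraph with minimum degree at least 11,
the signature of every edge consists either of exactly two disjoint 2-element
sets, or of one 2-element set together with 3-element sets each containing
that 2-element set. -/
theorem stmt_12 {V : Type*} [Fintype V] [DecidableEq V]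
    (H : Finset (Finset V))
    (huniform : ∀ e ∈ H, e.card = 4)
    (hfree : ∀ e ∈ H, ∀ f ∈ H, e ≠ f → (e ∩ f).card ≠ 1)
    (hdeg : ∀ v : V, 11 ≤ (H.filter (fun e => v ∈ e)).card) :
    ∀ e ∈ H,
      (∃ d₁ d₂ : Finset V, d₁.card = 2 ∧ d₂.card = 2 ∧ Disjoint d₁ d₂ ∧
        InSig H e d₁ ∧ InSig H e d₂ ∧
        (∀ f ∈ H, f ≠ e → (e ∩ f).Nonempty → e ∩ f = d₁ ∨ e ∩ f = d₂)) ∨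
      (∃ d : Finset V, d.card = 2 ∧ InSig H e d ∧
        (∀ f ∈ H, f ≠ e → (e ∩ f).Nonempty →
          e ∩ f = d ∨ ((e ∩ f).card = 3 ∧ d ⊆ e ∩ f))) := by
  intro e he
  have hH : (H : Set (Finset V)).Sized 4 := huniform
  have hP : Set.IsIntersectingOf {1}ᶜ (H : Set (Finset V)) := hfree
  have hdeg11 : ∀ v, 11 ≤ codegree H {v} := by simpa only [codegree_singleton] using hdeg
  have hpartner := exists_ne_forall_mem_of_mem hH hP hdeg11
  have hcard : ∀ f ∈ H, f ≠ e → (e ∩ f).Nonempty → (e ∩ f).card = 2 ∨ (e ∩ f).card = 3 :=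
    fun f hf ↦ card_inter_eq_two_or_three hH hP he hf
  have hcard2 : ∀ f ∈ H, f ≠ e → (e ∩ f).Nonempty → 2 ≤ (e ∩ f).card := fun f hf hfe hef ↦ by
    rcases hcard f hf hfe hef with h2 | h3 <;> omega
  obtain ⟨f, hf, hfe, hef⟩ := exists_card_inter_eq_two hH hP hpartner
    (fun v ↦ (by norm_num : 5 ≤ 11).trans (hdeg11 v)) he
  by_cases hg : ∃ g ∈ H, g ≠ e ∧ e ∩ g = e \ f
  · obtain ⟨g, hg, hge, hfg⟩ := hg
    have heg : (e ∩ g).card = 2 := by grind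
    refine Or.inl ⟨e ∩ f, e ∩ g, hef, heg, hfg ▸ (Finset.disjoint_sdiff_inter e f).symm,
      ⟨f, hf, hfe, rfl⟩, ⟨g, hg, hge, rfl⟩, fun h hh hhe hne ↦ ?_⟩
    exact inter_eq_or_inter_eq_of_inter_eq_sdiff hH hpartner he hf hef hg heg hfg hh hhe
      (hcard2 h hh hhe hne)
  · push Not at hg
    refine Or.inr ⟨e ∩ f, hef, ⟨f, hf, hfe, rfl⟩, fun h hh hhe hne ↦ ?_⟩
    have hfh := (inter_eq_sdiff_or_inter_subset hH hpartner he hf hef hh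
      (hcard2 h hh hhe hne)).resolve_left (hg h hh hhe)
    exact (hcard h hh hhe hne).imp
      (fun h2 ↦ (Finset.eq_of_subset_of_card_le hfh (by rw [hef, h2])).symm) fun h3 ↦ ⟨h3, hfh⟩
end

section
/- For n \ge 9, the maximum number of edges in a 3-uniform hypergraph on n vertices with no loose path of length three is at most \binom{n-1}{2}, with the bound attained by the full star (all triples containing a fixed vertex). -/
/-- `H` contains no loose path of length three. -/
def P33Free {V : Type*} [DecidableEq V] (H : Finset (Finset V)) : Prop :=
  ¬ ∃ e₁ e₂ e₃ : Finset V, e₁ ∈ H ∧ e₂ ∈ H ∧ e₃ ∈ H ∧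
    (e₁ ∪ e₂ ∪ e₃).card = 7 ∧ (e₁ ∩ e₂).card = 1 ∧ (e₂ ∩ e₃).card = 1 ∧
    e₁ ∩ e₃ = ∅

/-!
Let `n` be the number of vertices. If `H` contains a loose triangle with vertex set `U`, no edge
meets `U` in one vertex, an edge meeting `U` in two vertices does so in one of six pairs, and the
remaining edges avoid both `U` and the vertices attached to it in this way. Such a block carries few
edges, and the rest of `H` is handled by induction.

Otherwise consider the link graph of a non-isolated vertex `v`. If every edge avoiding `v` contains,
with one end of a link edge, also the other end, then every edge touching `v` or its link has two
vertices in the link, each of degree at most `max (n - 2) 3`, and the remaining edges are again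
handled by induction. If this fails for every `v`, all degrees are at most `n + 1`, and a vertex of
degree `n + 1` forces another one of degree at most `1`; summing degrees, `H` has at most about
`n ^ 2 / 3` edges.
-/

section

open Finset

variable {V : Type*} [DecidableEq V] {H : Finset (Finset V)} {X : Finset V}

lemma exists_eq_insert_pair_of_mem {e : Finset V} (he : #e = 3) {a : V} (ha : a ∈ e) :
    ∃ p q, a ≠ p ∧ a ≠ q ∧ p ≠ q ∧ e = {a, p, q} := by
  obtain ⟨p, q, hpq, heq⟩ := card_eq_two.1 (by rw [card_erase_of_mem ha, he] : #(e.erase a) = 2)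
  have hp : p ∈ e.erase a := by rw [heq]; exact mem_insert_self _ _
  have hq : q ∈ e.erase a := by rw [heq]; exact mem_insert_of_mem (mem_singleton_self _)
  exact ⟨p, q, (ne_of_mem_erase hp).symm, (ne_of_mem_erase hq).symm, hpq,
    by rw [← heq, insert_erase ha]⟩

lemma exists_eq_triple_of_mem_of_mem {e : Finset V} (he : #e = 3) {a b : V} (hab : a ≠ b)
    (ha : a ∈ e) (hb : b ∈ e) : ∃ z, a ≠ z ∧ b ≠ z ∧ e = {a, b, z} := by
  obtain ⟨p, q, hap, haq, hpq, rfl⟩ := exists_eq_insert_pair_of_mem he ha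
  obtain rfl | rfl : b = p ∨ b = q := by grind
  · exact ⟨q, haq, hpq, rfl⟩
  · exact ⟨p, hap, hpq.symm, by grind⟩

lemma ne_of_card_triple {a b c : V} (h : #{a, b, c} = 3) : a ≠ b ∧ a ≠ c ∧ b ≠ c := by
  grind

namespace P33Free

lemma mono (hP : P33Free H) {H' : Finset (Finset V)} (hH : H' ⊆ H) : P33Free H' :=
  fun ⟨e₁, e₂, e₃, h₁, h₂, h₃, hpath⟩ => hP ⟨e₁, e₂, e₃, hH h₁, hH h₂, hH h₃, hpath⟩

lemma not_disjoint (hP : P33Free H) (h3 : ∀ e ∈ H, #e = 3) {e₁ e₂ e₃ : Finset V}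
    (h₁ : e₁ ∈ H) (h₂ : e₂ ∈ H) (h₃ : e₃ ∈ H) (h₁₂ : #(e₁ ∩ e₂) = 1) (h₂₃ : #(e₂ ∩ e₃) = 1) :
    ¬ Disjoint e₁ e₃ := by
  intro hd
  rw [disjoint_iff_inter_eq_empty] at hd
  have hinter : (e₁ ∪ e₂) ∩ e₃ = e₂ ∩ e₃ := by
    rw [union_inter_distrib_right, hd, empty_union]
  have hu₁₂ := card_union_add_card_inter e₁ e₂
  have hu := card_union_add_card_inter (e₁ ∪ e₂) e₃
  rw [hinter] at hu
  have := h3 _ h₁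
  have := h3 _ h₂
  have := h3 _ h₃
  exact hP ⟨e₁, e₂, e₃, h₁, h₂, h₃, by omega, h₁₂, h₂₃, hd⟩

lemma not_nodup (hP : P33Free H) (h3 : ∀ e ∈ H, #e = 3) {e₁ e₂ e₃ : Finset V}
    (h₁ : e₁ ∈ H) (h₂ : e₂ ∈ H) (h₃ : e₃ ∈ H) (a b c d e f g : V)
    (he₁ : e₁ = {a, b, c}) (he₂ : e₂ = {c, d, e}) (he₃ : e₃ = {e, f, g}) :
    ¬ [a, b, c, d, e, f, g].Nodup := by
  intro hnd
  simp only [List.nodup_cons, List.mem_cons, not_or, List.not_mem_nil] at hnd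
  refine hP.not_disjoint h3 h₁ h₂ h₃ (card_eq_one.2 ⟨c, ?_⟩) (card_eq_one.2 ⟨e, ?_⟩)
    (disjoint_left.2 ?_) <;> grind

end P33Free

/-- A loose triangle: three triples meeting pairwise in the three distinct corners `x i`, the edge
opposite to `x k` having `y k` as its private vertex. Indexing by `Fin 3` makes every statement
about a triangle hold up to its symmetries. -/
structure IsLooseTriangle (H : Finset (Finset V)) (x y : Fin 3 → V) : Prop where
  x_injective : Function.Injective x
  y_injective : Function.Injective y
  x_ne_y : ∀ i j, x i ≠ y j
  edge_mem : ∀ i j k, i ≠ j → i ≠ k → j ≠ k → {x i, x j, y k} ∈ H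

lemma isLooseTriangle_of_nodup {a b c p q r : V} (hnd : [a, b, c, p, q, r].Nodup)
    (habr : {a, b, r} ∈ H) (hacq : {a, c, q} ∈ H) (hbcp : {b, c, p} ∈ H) :
    IsLooseTriangle H ![a, b, c] ![p, q, r] := by
  have hbar : {b, a, r} ∈ H := by rwa [insert_comm]
  have hcaq : {c, a, q} ∈ H := by rwa [insert_comm]
  have hcbp : {c, b, p} ∈ H := by rwa [insert_comm]
  simp only [List.nodup_cons, List.mem_cons, not_or, List.not_mem_nil] at hnd
  constructor <;> simp [Function.Injective, Fin.forall_fin_succ] <;> grind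

/-- The six vertices of the loose triangle with corners `x` and private vertices `y`. -/
def triangleVertices (x y : Fin 3 → V) : Finset V := univ.image x ∪ univ.image y

lemma mem_triangleVertices {x y : Fin 3 → V} {z : V} :
    z ∈ triangleVertices x y ↔ (∃ i, x i = z) ∨ ∃ i, y i = z := by
  simp [triangleVertices]

lemma exists_third (i j : Fin 3) : ∃ k, i ≠ k ∧ j ≠ k := by
  decide +revert

lemma univ_eq_of_ne {i j k : Fin 3} (hij : i ≠ j) (hik : i ≠ k) (hjk : j ≠ k) :
    (univ : Finset (Fin 3)) = {i, j, k} := by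
  decide +revert

namespace IsLooseTriangle

variable {x y : Fin 3 → V} {i j k : Fin 3} {w p q : V} {e f s : Finset V}

lemma nodup (hT : IsLooseTriangle H x y) (hij : i ≠ j) (hik : i ≠ k) (hjk : j ≠ k) :
    [x i, x j, x k, y i, y j, y k].Nodup := by
  have := hT.x_injective
  have := hT.y_injective
  have := hT.x_ne_y
  simp only [List.nodup_cons, List.mem_cons, not_or, List.not_mem_nil]
  grind [Function.Injective]

lemma x_triple_notMem (hT : IsLooseTriangle H x y) (hP : P33Free H) (h3 : ∀ e ∈ H, #e = 3)
    (hij : i ≠ j) (hp : p ∈ triangleVertices x y → p = y j)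
    (hq : q ∈ triangleVertices x y → q = y j) : {x i, p, q} ∉ H := by
  intro he
  have hne := ne_of_card_triple (h3 _ he)
  obtain ⟨k, hik, hjk⟩ := exists_third i j
  have hnd := hT.nodup hij hik hjk
  refine hP.not_nodup h3 he (hT.edge_mem i j k hij hik hjk)
    (hT.edge_mem j k i hjk hij.symm hik.symm) p q (x i) (y k) (x j) (x k) (y i)
    (by grind) (by grind) (by grind) ?_
  rw [mem_triangleVertices] at hp hq
  simp only [List.nodup_cons, List.mem_cons, not_or, List.not_mem_nil] at hnd ⊢
  grind

lemma y_triple_notMem (hT : IsLooseTriangle H x y) (hP : P33Free H) (h3 : ∀ e ∈ H, #e = 3)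
    (hij : i ≠ j) (hp : p ∈ triangleVertices x y → p = y j)
    (hq : q ∈ triangleVertices x y → q = y j) : {y i, p, q} ∉ H := by
  intro he
  have hne := ne_of_card_triple (h3 _ he)
  obtain ⟨k, hik, hjk⟩ := exists_third i j
  have hnd := hT.nodup hij hik hjk
  refine hP.not_nodup h3 he (hT.edge_mem j k i hjk hij.symm hik.symm)
    (hT.edge_mem i j k hij hik hjk) p q (y i) (x k) (x j) (x i) (y k)
    (by grind) (by grind) (by grind) ?_
  rw [mem_triangleVertices] at hp hq
  simp only [List.nodup_cons, List.mem_cons, not_or, List.not_mem_nil] at hnd ⊢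
  grind

lemma card_inter_ne_one (hT : IsLooseTriangle H x y) (hP : P33Free H) (h3 : ∀ e ∈ H, #e = 3)
    (he : e ∈ H) : #(e ∩ triangleVertices x y) ≠ 1 := by
  intro hcard
  obtain ⟨u, hu⟩ := card_eq_one.1 hcard
  have huU : u ∈ e ∩ triangleVertices x y := hu ▸ mem_singleton_self u
  obtain ⟨p, q, hup, huq, -, rfl⟩ := exists_eq_insert_pair_of_mem (h3 e he) (mem_inter.1 huU).1
  have hp : p ∉ triangleVertices x y := by grind
  have hq : q ∉ triangleVertices x y := by grind
  obtain ⟨i, rfl⟩ | ⟨i, rfl⟩ := mem_triangleVertices.1 (mem_inter.1 huU).2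
  all_goals obtain ⟨j, hij, -⟩ := exists_third i i
  · exact hT.x_triple_notMem hP h3 hij (absurd · hp) (absurd · hq) he
  · exact hT.y_triple_notMem hP h3 hij (absurd · hp) (absurd · hq) he

lemma eq_of_card_inter_eq_two (hT : IsLooseTriangle H x y) (hP : P33Free H)
    (h3 : ∀ e ∈ H, #e = 3) (he : e ∈ H) (hcard : #(e ∩ triangleVertices x y) = 2) :
    ∃ w ∉ triangleVertices x y, (∃ i j, i ≠ j ∧ e = {w, x i, x j}) ∨ ∃ i, e = {w, x i, y i} := by
  obtain ⟨w, hw⟩ : ∃ w, e \ triangleVertices x y = {w} :=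
    card_eq_one.1 (by have := card_sdiff_add_card_inter e (triangleVertices x y); grind)
  have hwe : w ∈ e ∧ w ∉ triangleVertices x y := mem_sdiff.1 (hw ▸ mem_singleton_self w)
  obtain ⟨p, q, hwp, hwq, hpq, rfl⟩ := exists_eq_insert_pair_of_mem (h3 e he) hwe.1
  have hp : p ∈ triangleVertices x y := by grind
  have hq : q ∈ triangleVertices x y := by grind
  have hwy (j : Fin 3) : w ∈ triangleVertices x y → w = y j := (absurd · hwe.2)
  have hxy {i j : Fin 3} (h : {w, x i, y j} ∈ H) : i = j := by
    by_contra hij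
    exact hT.x_triple_notMem hP h3 hij (hwy j) (fun _ => rfl) (by rwa [insert_comm])
  refine ⟨w, hwe.2, ?_⟩
  obtain ⟨i, rfl⟩ | ⟨i, rfl⟩ := mem_triangleVertices.1 hp <;>
    obtain ⟨j, rfl⟩ | ⟨j, rfl⟩ := mem_triangleVertices.1 hq
  · exact .inl ⟨i, j, fun h => hpq (congrArg x h), rfl⟩
  · exact .inr ⟨i, by rw [hxy he]⟩
  · rw [pair_comm] at he ⊢
    exact .inr ⟨j, by rw [hxy he]⟩
  · rw [insert_comm] at he
    exact (hT.y_triple_notMem hP h3 (fun h => hpq (congrArg y h)) (hwy j) (fun _ => rfl) he).elim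

lemma not_disjoint_of_mem_of_card_inter_eq_two (hT : IsLooseTriangle H x y) (hP : P33Free H)
    (h3 : ∀ e ∈ H, #e = 3) (he : e ∈ H) (hcard : #(e ∩ triangleVertices x y) = 2)
    (hw : w ∉ triangleVertices x y) (hwe : w ∈ e) (hf : f ∈ H) (hwf : w ∈ f) :
    ¬ Disjoint f (triangleVertices x y) := by
  intro hd
  obtain ⟨p, q, hwp, hwq, hpq, rfl⟩ := exists_eq_insert_pair_of_mem (h3 f hf) hwf
  have hp : p ∉ triangleVertices x y := disjoint_left.1 hd (by simp)
  have hq : q ∉ triangleVertices x y := disjoint_left.1 hd (by simp)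
  obtain ⟨i, j, k, z, hij, hik, hjk, hz, rfl⟩ : ∃ i j k z, i ≠ j ∧ i ≠ k ∧ j ≠ k ∧
      (z = x j ∨ z = y i) ∧ e = {w, z, x i} := by
    obtain ⟨w', -, ⟨i, j, hij, rfl⟩ | ⟨i, rfl⟩⟩ := hT.eq_of_card_inter_eq_two hP h3 he hcard
    · obtain ⟨k, hik, hjk⟩ := exists_third i j
      refine ⟨i, j, k, x j, hij, hik, hjk, .inl rfl, ?_⟩
      grind [mem_triangleVertices]
    · obtain ⟨j, hij, -⟩ := exists_third i i
      obtain ⟨k, hik, hjk⟩ := exists_third i j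
      refine ⟨i, j, k, y i, hij, hik, hjk, .inr rfl, ?_⟩
      grind [mem_triangleVertices]
  have hnd := hT.nodup hij hik hjk
  refine hP.not_nodup h3 hf he (hT.edge_mem i k j hik hij hjk.symm) p q w z (x i) (x k) (y j)
    (by grind) (by grind) (by grind) ?_
  rw [mem_triangleVertices] at hp hq hw
  simp only [List.nodup_cons, List.mem_cons, not_or, List.not_mem_nil] at hnd ⊢
  grind

lemma image_y_notMem (hT : IsLooseTriangle H x y) (hP : P33Free H) (h3 : ∀ e ∈ H, #e = 3)
    (hw : w ∉ triangleVertices x y) (hij : i ≠ j) (he : {w, x i, x j} ∈ H) :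
    univ.image y ∉ H := by
  intro hy
  obtain ⟨k, hik, hjk⟩ := exists_third i j
  have hnd := hT.nodup hij hik hjk
  have hyijk : univ.image y = {y i, y j, y k} := by
    simp only [univ_eq_of_ne hij hik hjk, image_insert, image_singleton]
  refine hP.not_nodup h3 he (hT.edge_mem j k i hjk hij.symm hik.symm) hy
    w (x i) (x j) (x k) (y i) (y j) (y k) (by grind) (by grind) (by grind) ?_
  rw [mem_triangleVertices] at hw
  simp only [List.nodup_cons, List.mem_cons, not_or, List.not_mem_nil] at hnd ⊢
  grind

lemma triangleVertices_eq (hij : i ≠ j) (hik : i ≠ k) (hjk : j ≠ k) :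
    triangleVertices x y = {x i, x j, x k, y i, y j, y k} := by
  simp only [triangleVertices, univ_eq_of_ne hij hik hjk, image_insert, image_singleton]
  grind

lemma card_triangleVertices (hT : IsLooseTriangle H x y) : #(triangleVertices x y) = 6 := by
  have hdisj : Disjoint (univ.image x) (univ.image y) := by
    simp [disjoint_left, hT.x_ne_y, eq_comm]
  rw [triangleVertices, card_union_of_disjoint hdisj, card_image_of_injective _ hT.x_injective,
    card_image_of_injective _ hT.y_injective, card_fin]

lemma x_mem_or_y_mem (hT : IsLooseTriangle H x y) (hP : P33Free H) (h3 : ∀ e ∈ H, #e = 3)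
    (hw : w ∉ triangleVertices x y) (he : {w, x i, y i} ∈ H) (hs : s ∈ H)
    (hsU : s ⊆ triangleVertices x y) : x i ∈ s ∨ y i ∈ s := by
  by_contra! hi
  obtain ⟨j, hij, -⟩ := exists_third i i
  obtain ⟨k, hik, hjk⟩ := exists_third i j
  have hU := triangleVertices_eq (x := x) (y := y) hij hik hjk
  have hnd := hT.nodup hij hik hjk
  obtain ⟨z, hz⟩ : ∃ z, {x j, x k, y j, y k} \ s = {z} := by
    refine card_eq_one.1 ?_
    rw [card_sdiff_of_subset (by grind), h3 s hs]
    grind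
  have hzmem : z ∈ ({x j, x k, y j, y k} : Finset V) \ s := hz ▸ mem_singleton_self z
  have hmem_s (u : V) (hu : u ∈ ({x j, x k, y j, y k} : Finset V)) : u ∈ s ↔ u ≠ z := by
    have := Finset.ext_iff.1 hz u
    grind
  obtain ⟨f, hf, hif, hfs⟩ : ∃ f ∈ H, {w, x i, y i} ∩ f = {x i} ∧ #(f ∩ s) = 1 := by
    simp only [List.nodup_cons, List.mem_cons, not_or, List.not_mem_nil] at hnd
    obtain rfl | rfl | rfl | rfl : z = x j ∨ z = y k ∨ z = x k ∨ z = y j := by grind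
    · exact ⟨_, hT.edge_mem i j k hij hik hjk, by grind, card_eq_one.2 ⟨y k, by grind⟩⟩
    · exact ⟨_, hT.edge_mem i j k hij hik hjk, by grind, card_eq_one.2 ⟨x j, by grind⟩⟩
    · exact ⟨_, hT.edge_mem i k j hik hij hjk.symm, by grind, card_eq_one.2 ⟨y j, by grind⟩⟩
    · exact ⟨_, hT.edge_mem i k j hik hij hjk.symm, by grind, card_eq_one.2 ⟨x k, by grind⟩⟩
  refine hP.not_disjoint h3 he hf hs (by rw [hif, card_singleton]) hfs ?_
  grind [disjoint_left]

lemma sdiff_notMem (hT : IsLooseTriangle H x y) (hP : P33Free H) (h3 : ∀ e ∈ H, #e = 3)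
    (hw : w ∉ triangleVertices x y) (he : {w, x i, y i} ∈ H) (hs : s ∈ H)
    (hsU : s ⊆ triangleVertices x y) : triangleVertices x y \ s ∉ H := by
  intro ht
  have hsi := hT.x_mem_or_y_mem hP h3 hw he hs hsU
  have hti := hT.x_mem_or_y_mem hP h3 hw he ht sdiff_subset
  refine hP.not_disjoint h3 hs he ht ?_ ?_ disjoint_sdiff
  · grind
  · grind

end IsLooseTriangle

lemma filter_subset_powersetCard {m : ℕ} (hm : ∀ e ∈ H, #e = m) (U : Finset V) :
    {e ∈ H | e ⊆ U} ⊆ U.powersetCard m := fun e he =>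
  mem_powersetCard.2 ⟨(mem_filter.1 he).2, hm e (mem_filter.1 he).1⟩

lemma two_mul_card_le_of_sdiff_notMem {U : Finset V} {m : ℕ} (hU : #U = 2 * m)
    (hm : ∀ e ∈ H, #e = m) (hHU : ∀ e ∈ H, e ⊆ U) (hsdiff : ∀ e ∈ H, U \ e ∉ H) :
    2 * #H ≤ (2 * m).choose m := by
  have hinj : Set.InjOn (U \ ·) (H : Set (Finset V)) := fun s hs t ht hst => by
    have hst' := congrArg (U \ ·) hst
    simpa only [Finset.sdiff_sdiff_eq_self (hHU s hs), Finset.sdiff_sdiff_eq_self (hHU t ht)]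
      using hst'
  have hdisj : Disjoint H (H.image (U \ ·)) := by
    refine disjoint_right.2 fun t ht => ?_
    obtain ⟨s, hs, rfl⟩ := mem_image.1 ht
    exact hsdiff s hs
  have hsub : H ∪ H.image (U \ ·) ⊆ U.powersetCard m := by
    refine union_subset (fun s hs => mem_powersetCard.2 ⟨hHU s hs, hm s hs⟩) fun t ht => ?_
    obtain ⟨s, hs, rfl⟩ := mem_image.1 ht
    refine mem_powersetCard.2 ⟨sdiff_subset, ?_⟩
    rw [card_sdiff_of_subset (hHU s hs), hm s hs, hU]
    omega
  calc 2 * #H = #(H ∪ H.image (U \ ·)) := by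
        rw [card_union_of_disjoint hdisj, card_image_of_injOn hinj, two_mul]
    _ ≤ #(U.powersetCard m) := card_le_card hsub
    _ = (2 * m).choose m := by rw [card_powersetCard, hU]

/-- The vertices outside `U` of the edges (in applications of size three) that meet `U` in exactly
two vertices. -/
def attachedVertices (H : Finset (Finset V)) (U : Finset V) : Finset V :=
  {e ∈ H | #(e ∩ U) = 2}.biUnion (· \ U)

lemma card_filter_card_inter_eq_two_le (h3 : ∀ e ∈ H, #e = 3) {U : Finset V}
    {P : Finset (Finset V)} (hP : ∀ e ∈ H, #(e ∩ U) = 2 → e ∩ U ∈ P) :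
    #{e ∈ H | #(e ∩ U) = 2} ≤ #(attachedVertices H U) * #P := by
  refine le_trans (card_le_card fun e he => ?_) (card_image₂_le insert _ _)
  obtain ⟨heH, hcard⟩ := mem_filter.1 he
  obtain ⟨w, hw⟩ : ∃ w, e \ U = {w} :=
    card_eq_one.1 (by have := card_sdiff_add_card_inter e U; have := h3 e heH; omega)
  have hwe : w ∈ attachedVertices H U :=
    mem_biUnion.2 ⟨e, he, by rw [hw]; exact mem_singleton_self w⟩
  refine mem_image₂.2 ⟨w, hwe, e ∩ U, hP e heH hcard, ?_⟩
  rw [insert_eq, ← hw, sdiff_union_inter]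

namespace IsLooseTriangle

variable {x y : Fin 3 → V} {i j : Fin 3} {w : V} {e : Finset V}

lemma subset_or_disjoint_or_card_inter_eq_two (hT : IsLooseTriangle H x y) (hP : P33Free H)
    (h3 : ∀ e ∈ H, #e = 3) (he : e ∈ H) :
    e ⊆ triangleVertices x y ∨ Disjoint e (triangleVertices x y) ∨
      #(e ∩ triangleVertices x y) = 2 := by
  have hne := hT.card_inter_ne_one hP h3 he
  have hle : #(e ∩ triangleVertices x y) ≤ 3 := h3 e he ▸ card_le_card inter_subset_left
  interval_cases hc : #(e ∩ triangleVertices x y)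
  · exact .inr (.inl (disjoint_iff_inter_eq_empty.2 (card_eq_zero.1 hc)))
  · exact absurd rfl hne
  · exact .inr (.inr rfl)
  · exact .inl (inter_eq_left.1 (eq_of_subset_of_card_le inter_subset_left
      (by rw [hc, h3 e he])))

lemma card_filter_subset_le_twenty (hT : IsLooseTriangle H x y) (h3 : ∀ e ∈ H, #e = 3) :
    #{e ∈ H | e ⊆ triangleVertices x y} ≤ 20 := by
  have hle := card_le_card (filter_subset_powersetCard h3 (triangleVertices x y))
  rwa [card_powersetCard, hT.card_triangleVertices] at hle

lemma card_filter_subset_le_nineteen (hT : IsLooseTriangle H x y) (hP : P33Free H)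
    (h3 : ∀ e ∈ H, #e = 3) (hw : w ∉ triangleVertices x y) (hij : i ≠ j)
    (he : {w, x i, x j} ∈ H) : #{e ∈ H | e ⊆ triangleVertices x y} ≤ 19 := by
  have hy : univ.image y ∈ (triangleVertices x y).powersetCard 3 :=
    mem_powersetCard.2
      ⟨subset_union_right, by rw [card_image_of_injective _ hT.y_injective, card_fin]⟩
  have hyH : univ.image y ∉ {e ∈ H | e ⊆ triangleVertices x y} := fun h =>
    hT.image_y_notMem hP h3 hw hij he (mem_filter.1 h).1
  have hlt := card_lt_card ((filter_subset_powersetCard h3 _).ssubset_of_mem_notMem hy hyH)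
  rw [card_powersetCard, hT.card_triangleVertices] at hlt
  exact Nat.le_of_lt_succ hlt

lemma card_filter_subset_le_ten (hT : IsLooseTriangle H x y) (hP : P33Free H)
    (h3 : ∀ e ∈ H, #e = 3) (hw : w ∉ triangleVertices x y) (he : {w, x i, y i} ∈ H) :
    #{e ∈ H | e ⊆ triangleVertices x y} ≤ 10 := by
  have htwo := two_mul_card_le_of_sdiff_notMem (H := {e ∈ H | e ⊆ triangleVertices x y}) (m := 3)
    hT.card_triangleVertices (fun e he => h3 e (mem_filter.1 he).1)
    (fun e he => (mem_filter.1 he).2) fun s hs ht =>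
      hT.sdiff_notMem hP h3 hw he (mem_filter.1 hs).1 (mem_filter.1 hs).2 (mem_filter.1 ht).1
  have hchoose : (2 * 3).choose 3 = 20 := rfl
  omega

lemma corner_pair_mem (hw : w ∉ triangleVertices x y)
    (hcard : #({w, x i, x j} ∩ triangleVertices x y) = 2) :
    {w, x i, x j} ∩ triangleVertices x y ∈ (univ.image x).powersetCard 2 := by
  refine mem_powersetCard.2 ⟨fun z hz => ?_, hcard⟩
  obtain rfl | rfl | rfl : z = w ∨ z = x i ∨ z = x j := by simpa using (mem_inter.1 hz).1
  · exact absurd (mem_inter.1 hz).2 hw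
  · exact mem_image_of_mem x (mem_univ i)
  · exact mem_image_of_mem x (mem_univ j)

lemma card_corner_pairs (hT : IsLooseTriangle H x y) : #((univ.image x).powersetCard 2) = 3 := by
  rw [card_powersetCard, card_image_of_injective _ hT.x_injective, card_fin]
  rfl

lemma card_filter_card_inter_eq_two_le_six_mul (hT : IsLooseTriangle H x y) (hP : P33Free H)
    (h3 : ∀ e ∈ H, #e = 3) :
    #{e ∈ H | #(e ∩ triangleVertices x y) = 2} ≤
      6 * #(attachedVertices H (triangleVertices x y)) := by
  have hcorners := hT.card_corner_pairs
  have hspokes : #(univ.image fun i => ({x i, y i} : Finset V)) ≤ 3 := card_image_le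
  have hle := card_filter_card_inter_eq_two_le (U := triangleVertices x y)
    (P := (univ.image x).powersetCard 2 ∪ univ.image fun i => {x i, y i}) h3 fun e he hcard => by
      obtain ⟨w, hw, ⟨i, j, -, rfl⟩ | ⟨i, rfl⟩⟩ := hT.eq_of_card_inter_eq_two hP h3 he hcard
      · exact mem_union_left _ (corner_pair_mem hw hcard)
      · refine mem_union_right _ (mem_image.2 ⟨i, mem_univ i, ?_⟩)
        grind [mem_triangleVertices]
  exact hle.trans (by rw [mul_comm]; gcongr; exact (card_union_le _ _).trans (by omega))

lemma card_filter_card_inter_eq_two_le_three_mul (hT : IsLooseTriangle H x y) (hP : P33Free H)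
    (h3 : ∀ e ∈ H, #e = 3) (hspoke : ∀ w ∉ triangleVertices x y, ∀ i, {w, x i, y i} ∉ H) :
    #{e ∈ H | #(e ∩ triangleVertices x y) = 2} ≤
      3 * #(attachedVertices H (triangleVertices x y)) := by
  have hle := card_filter_card_inter_eq_two_le (U := triangleVertices x y)
    (P := (univ.image x).powersetCard 2) h3 fun e he hcard => by
      obtain ⟨w, hw, ⟨i, j, -, rfl⟩ | ⟨i, rfl⟩⟩ := hT.eq_of_card_inter_eq_two hP h3 he hcard
      · exact corner_pair_mem hw hcard
      · exact absurd he (hspoke w hw i)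
  rwa [mul_comm, hT.card_corner_pairs] at hle

lemma card_add_card_le (hT : IsLooseTriangle H x y) (hP : P33Free H) (h3 : ∀ e ∈ H, #e = 3) :
    #{e ∈ H | e ⊆ triangleVertices x y} + #{e ∈ H | #(e ∩ triangleVertices x y) = 2} ≤
      max 20 (max (19 + 3 * #(attachedVertices H (triangleVertices x y)))
        (10 + 6 * #(attachedVertices H (triangleVertices x y)))) := by
  by_cases hspoke : ∀ w ∉ triangleVertices x y, ∀ i, {w, x i, y i} ∉ H
  · have hthree := hT.card_filter_card_inter_eq_two_le_three_mul hP h3 hspoke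
    obtain hempty | ⟨e, he⟩ := {e ∈ H | #(e ∩ triangleVertices x y) = 2}.eq_empty_or_nonempty
    · have := hT.card_filter_subset_le_twenty h3
      rw [hempty, card_empty]
      omega
    · obtain ⟨heH, hcard⟩ := mem_filter.1 he
      obtain ⟨w, hw, ⟨i, j, hij, rfl⟩ | ⟨i, rfl⟩⟩ := hT.eq_of_card_inter_eq_two hP h3 heH hcard
      · have := hT.card_filter_subset_le_nineteen hP h3 hw hij heH
        omega
      · exact absurd heH (hspoke w hw i)
  · push Not at hspoke
    obtain ⟨w, hw, i, he⟩ := hspoke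
    have hten := hT.card_filter_subset_le_ten hP h3 hw he
    have hsix := hT.card_filter_card_inter_eq_two_le_six_mul hP h3
    omega

lemma subset_sdiff_of_disjoint (hT : IsLooseTriangle H x y) (hP : P33Free H)
    (h3 : ∀ e ∈ H, #e = 3) (hX : ∀ e ∈ H, e ⊆ X) (he : e ∈ H)
    (hd : Disjoint e (triangleVertices x y)) :
    e ⊆ X \ (triangleVertices x y ∪ attachedVertices H (triangleVertices x y)) := by
  refine subset_sdiff.2 ⟨hX e he, disjoint_union_right.2 ⟨hd, disjoint_left.2 fun w hwe hw => ?_⟩⟩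
  obtain ⟨f, hf, hwf⟩ := mem_biUnion.1 hw
  obtain ⟨hfH, hcard⟩ := mem_filter.1 hf
  obtain ⟨hwf, hwU⟩ := mem_sdiff.1 hwf
  exact hT.not_disjoint_of_mem_of_card_inter_eq_two hP h3 hfH hcard hwU hwf he hwe hd

lemma triangleVertices_subset (hT : IsLooseTriangle H x y) (hX : ∀ e ∈ H, e ⊆ X) :
    triangleVertices x y ⊆ X := by
  intro z hz
  obtain ⟨i, rfl⟩ | ⟨i, rfl⟩ := mem_triangleVertices.1 hz
  all_goals
    obtain ⟨j, hij, -⟩ := exists_third i i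
    obtain ⟨k, hik, hjk⟩ := exists_third i j
  · exact hX _ (hT.edge_mem i j k hij hik hjk) (by simp)
  · exact hX _ (hT.edge_mem j k i hjk hij.symm hik.symm) (by simp)

lemma exists_card_le (hT : IsLooseTriangle H x y) (hP : P33Free H) (h3 : ∀ e ∈ H, #e = 3)
    (hX : ∀ e ∈ H, e ⊆ X) :
    ∃ (R : Finset V) (w : ℕ), 6 + w + #R = #X ∧
      #H ≤ max 20 (max (19 + 3 * w) (10 + 6 * w)) + #{e ∈ H | e ⊆ R} := by
  set U := triangleVertices x y with hU
  set W := attachedVertices H U with hW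
  have hUX : U ⊆ X := hT.triangleVertices_subset hX
  have hWX : W ⊆ X := biUnion_subset.2 fun e he => sdiff_subset.trans (hX e (mem_filter.1 he).1)
  have hUW : Disjoint U W := by
    rw [hW, attachedVertices, disjoint_biUnion_right]
    exact fun e _ => disjoint_sdiff
  refine ⟨X \ (U ∪ W), #W, ?_, ?_⟩
  · rw [← hT.card_triangleVertices, ← card_union_of_disjoint hUW, add_comm]
    exact card_sdiff_add_card_eq_card (union_subset hUX hWX)
  · have hcover : H ⊆ {e ∈ H | e ⊆ U} ∪ {e ∈ H | #(e ∩ U) = 2} ∪ {e ∈ H | e ⊆ X \ (U ∪ W)} := by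
      intro e he
      obtain hsub | hd | hcard := hT.subset_or_disjoint_or_card_inter_eq_two hP h3 he
      · simp [he, hsub, hU]
      · simp only [mem_union, mem_filter, he, true_and]
        exact .inr (hT.subset_sdiff_of_disjoint hP h3 hX he hd)
      · simp [he, hcard, hU]
    calc #H ≤ _ := card_le_card hcover
      _ ≤ #{e ∈ H | e ⊆ U} + #{e ∈ H | #(e ∩ U) = 2} + #{e ∈ H | e ⊆ X \ (U ∪ W)} :=
        (card_union_le _ _).trans (Nat.add_le_add_right (card_union_le _ _) _)
      _ ≤ _ := Nat.add_le_add_right (hT.card_add_card_le hP h3) _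

end IsLooseTriangle

/-- `H` contains no loose triangle. -/
def LooseTriangleFree (H : Finset (Finset V)) : Prop := ∀ x y, ¬ IsLooseTriangle H x y

/-- The vertices of `X` that complete `u, v` to an edge of `H`. -/
def pairLink (H : Finset (Finset V)) (X : Finset V) (u v : V) : Finset V :=
  {z ∈ X | {u, v, z} ∈ H}

/-- The vertices other than `v` on the edges through `v`. -/
def linkSupport (H : Finset (Finset V)) (v : V) : Finset V :=
  {e ∈ H | v ∈ e}.biUnion (·.erase v)

/-- Every edge avoiding `v` is a union of components of the link graph of `v` and of vertices
outside that graph. -/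
def IsLinkClosed (H : Finset (Finset V)) (v : V) : Prop :=
  ∀ g ∈ H, v ∉ g → ∀ p q, {v, p, q} ∈ H → p ∈ g → q ∈ g

section PairLink

variable {u v z : V}

lemma mem_pairLink : z ∈ pairLink H X u v ↔ z ∈ X ∧ {u, v, z} ∈ H := mem_filter

lemma pairLink_subset (h3 : ∀ e ∈ H, #e = 3) : pairLink H X u v ⊆ X \ {u, v} := fun z hz => by
  have hne := ne_of_card_triple (h3 _ (mem_pairLink.1 hz).2)
  have := (mem_pairLink.1 hz).1
  grind

lemma card_pairLink_le (h3 : ∀ e ∈ H, #e = 3) (hu : u ∈ X) (hv : v ∈ X) (huv : u ≠ v) :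
    #(pairLink H X u v) ≤ #X - 2 := by
  have hsub : {u, v} ⊆ X := insert_subset hu (singleton_subset_iff.2 hv)
  rw [← card_pair huv, ← card_sdiff_of_subset hsub]
  exact card_le_card (pairLink_subset h3)

lemma mem_image_pairLink (h3 : ∀ e ∈ H, #e = 3) (hX : ∀ e ∈ H, e ⊆ X) (huv : u ≠ v)
    {e : Finset V} (he : e ∈ H) (hu : u ∈ e) (hv : v ∈ e) :
    e ∈ (pairLink H X u v).image fun z => {u, v, z} := by
  obtain ⟨z, -, -, rfl⟩ := exists_eq_triple_of_mem_of_mem (h3 e he) huv hu hv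
  exact mem_image_of_mem _ (mem_pairLink.2 ⟨hX _ he (by simp), he⟩)

lemma card_filter_mem_le_of_forall_mem (h3 : ∀ e ∈ H, #e = 3) (hX : ∀ e ∈ H, e ⊆ X)
    (hu : u ∈ X) (hv : v ∈ X) (huv : u ≠ v) (hall : ∀ e ∈ H, u ∈ e → v ∈ e) :
    #{e ∈ H | u ∈ e} ≤ #X - 2 := by
  have hsub : {e ∈ H | u ∈ e} ⊆ (pairLink H X u v).image fun z => {u, v, z} := fun e he => by
    obtain ⟨heH, hue⟩ := mem_filter.1 he
    exact mem_image_pairLink h3 hX huv heH hue (hall e heH hue)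
  exact (card_le_card hsub).trans (card_image_le.trans (card_pairLink_le h3 hu hv huv))

end PairLink

lemma mem_linkSupport (h3 : ∀ e ∈ H, #e = 3) {v p : V} :
    p ∈ linkSupport H v ↔ ∃ q, {v, p, q} ∈ H := by
  simp only [linkSupport, mem_biUnion, mem_filter, mem_erase]
  constructor
  · rintro ⟨e, ⟨he, hve⟩, hpv, hpe⟩
    obtain ⟨q, -, -, rfl⟩ := exists_eq_triple_of_mem_of_mem (h3 e he) hpv.symm hve hpe
    exact ⟨q, he⟩
  · rintro ⟨q, hq⟩
    exact ⟨_, ⟨hq, by simp⟩, (ne_of_card_triple (h3 _ hq)).1.symm, by simp⟩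

namespace IsLinkClosed

variable {v p : V} {e : Finset V}

lemma card_filter_mem_le (hv : IsLinkClosed H v) (h3 : ∀ e ∈ H, #e = 3) (hX : ∀ e ∈ H, e ⊆ X)
    (hp : p ∈ linkSupport H v) : #{e ∈ H | p ∈ e} ≤ max (#X - 2) 3 := by
  obtain ⟨q, hq⟩ := (mem_linkSupport h3).1 hp
  obtain ⟨hvp, hvq, hpq⟩ := ne_of_card_triple (h3 _ hq)
  have hvX : v ∈ X := hX _ hq (by simp)
  have hpX : p ∈ X := hX _ hq (by simp)
  have hqX : q ∈ X := hX _ hq (by simp)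
  by_cases hall : ∀ e ∈ H, p ∈ e → v ∈ e
  · exact le_max_of_le_left (card_filter_mem_le_of_forall_mem h3 hX hpX hvX hvp.symm hall)
  push Not at hall
  obtain ⟨g, hg, hpg, hvg⟩ := hall
  obtain ⟨r, hpr, hqr, rfl⟩ :=
    exists_eq_triple_of_mem_of_mem (h3 g hg) hpq hpg (hv g hg hvg p q hq hpg)
  have hlink {e : Finset V} (he : e ∈ H) (hpe : p ∈ e) (hve : v ∈ e) :
      e = {v, p, q} ∨ e = {v, p, r} := by
    obtain ⟨t, -, hpt, rfl⟩ := exists_eq_triple_of_mem_of_mem (h3 e he) hvp hve hpe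
    have := hv _ hg hvg p t he hpg
    grind
  by_cases hr : {v, p, r} ∈ H
  · refine le_max_of_le_right ((card_le_card fun e he => ?_).trans
      (card_le_three (a := {p, q, r}) (b := {v, p, q}) (c := {v, p, r})))
    obtain ⟨heH, hpe⟩ := mem_filter.1 he
    by_cases hve : v ∈ e
    · simp only [mem_insert, mem_singleton]
      exact .inr (hlink heH hpe hve)
    · have hqe := hv e heH hve p q hq hpe
      have hre := hv e heH hve p r hr hpe
      obtain ⟨t, -, -, rfl⟩ := exists_eq_triple_of_mem_of_mem (h3 e heH) hpq hpe hqe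
      grind
  · refine le_max_of_le_left (card_filter_mem_le_of_forall_mem h3 hX hpX hqX hpq ?_)
    intro e he hpe
    by_cases hve : v ∈ e
    · grind
    · exact hv e he hve p q hq hpe

lemma two_le_card_inter (hv : IsLinkClosed H v) (h3 : ∀ e ∈ H, #e = 3) (he : e ∈ H)
    (hmeet : ¬ Disjoint e (insert v (linkSupport H v))) : 2 ≤ #(linkSupport H v ∩ e) := by
  obtain ⟨p, q, hpq, hp, hq⟩ :
      ∃ p q, p ≠ q ∧ p ∈ linkSupport H v ∩ e ∧ q ∈ linkSupport H v ∩ e := by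
    simp only [mem_inter, mem_linkSupport h3]
    by_cases hve : v ∈ e
    · obtain ⟨p, q, -, -, hpq, rfl⟩ := exists_eq_insert_pair_of_mem (h3 e he) hve
      exact ⟨p, q, hpq, ⟨⟨q, he⟩, by simp⟩, ⟨p, by rwa [pair_comm]⟩, by simp⟩
    · obtain ⟨p, hpe, hp⟩ := not_disjoint_iff.1 hmeet
      obtain rfl | hp := mem_insert.1 hp
      · exact absurd hpe hve
      obtain ⟨q, hq⟩ := (mem_linkSupport h3).1 hp
      exact ⟨p, q, (ne_of_card_triple (h3 _ hq)).2.2, ⟨⟨q, hq⟩, hpe⟩,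
        ⟨p, by rwa [pair_comm]⟩, hv e he hve p q hq hpe⟩
  exact one_lt_card.2 ⟨p, hp, q, hq, hpq⟩

lemma exists_two_mul_card_le (hv : IsLinkClosed H v) (h3 : ∀ e ∈ H, #e = 3)
    (hX : ∀ e ∈ H, e ⊆ X) (he : e ∈ H) (hve : v ∈ e) :
    ∃ (I : Finset V) (s : ℕ), 2 ≤ s ∧ s + 1 + #I = #X ∧
      2 * #H ≤ s * max (#X - 2) 3 + 2 * #{e ∈ H | e ⊆ I} := by
  set S := linkSupport H v with hS
  have hSX : insert v S ⊆ X := insert_subset (hX e he hve) (biUnion_subset.2 fun f hf =>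
    (erase_subset v f).trans (hX f (mem_filter.1 hf).1))
  have hvS : v ∉ S := by simp [hS, linkSupport]
  refine ⟨X \ insert v S, #S, ?_, ?_, ?_⟩
  · exact (hv.two_le_card_inter h3 he (not_disjoint_iff.2 ⟨v, hve, mem_insert_self _ _⟩)).trans
      (card_le_card inter_subset_left)
  · rw [← card_insert_of_notMem hvS, add_comm, card_sdiff_add_card_eq_card hSX]
  have hmeet : #{e ∈ H | ¬ e ⊆ X \ insert v S} * 2 ≤ #S * max (#X - 2) 3 := by
    refine (card_nsmul_le_sum _ (fun e => #(S ∩ e)) 2 fun e he => ?_).trans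
      (sum_card_inter_le fun p hp => ?_)
    · obtain ⟨heH, hnot⟩ := mem_filter.1 he
      exact hv.two_le_card_inter h3 heH fun hd => hnot (subset_sdiff.2 ⟨hX e heH, hd⟩)
    · exact (card_le_card (filter_subset_filter _ (filter_subset _ _))).trans
        (hv.card_filter_mem_le h3 hX hp)
  have hsplit := card_filter_add_card_filter_not (s := H) (fun e => e ⊆ X \ insert v S)
  omega

end IsLinkClosed

section

variable {v a b c d : V}

lemma LooseTriangleFree.mem_of_link_edge (hT : LooseTriangleFree H) (hP : P33Free H)
    (h3 : ∀ e ∈ H, #e = 3) (hab : {v, a, b} ∈ H) (hcd : {v, c, d} ∈ H)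
    (hnd : [v, a, b, c, d].Nodup) {g : Finset V} (hg : g ∈ H) (hvg : v ∉ g)
    (hag : a ∈ g) (hbg : b ∉ g) : c ∈ g := by
  by_contra hcg
  simp only [List.nodup_cons, List.mem_cons, not_or, List.not_mem_nil] at hnd
  by_cases hdg : d ∈ g
  · obtain ⟨z, haz, hdz, rfl⟩ := exists_eq_triple_of_mem_of_mem (h3 g hg) (by grind) hag hdg
    refine hT _ _ (isLooseTriangle_of_nodup (a := v) (b := a) (c := d) (p := z) (q := c) (r := b)
      ?_ hab (by rwa [pair_comm]) hg)
    simp only [List.nodup_cons, List.mem_cons, not_or, List.not_mem_nil]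
    grind
  · obtain ⟨p, q, hap, haq, hpq, rfl⟩ := exists_eq_insert_pair_of_mem (h3 g hg) hag
    refine hP.not_nodup h3 hg hab hcd p q a b v c d (by grind) (by grind) (by grind) ?_
    simp only [List.nodup_cons, List.mem_cons, not_or, List.not_mem_nil]
    grind

lemma LooseTriangleFree.mem_and_mem_of_link_edge (hT : LooseTriangleFree H) (hP : P33Free H)
    (h3 : ∀ e ∈ H, #e = 3) (hab : {v, a, b} ∈ H) (hcd : {v, c, d} ∈ H)
    (hnd : [v, a, b, c, d].Nodup) {g : Finset V} (hg : g ∈ H) (hvg : v ∉ g)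
    (hag : a ∈ g) (hbg : b ∉ g) : c ∈ g ∧ d ∈ g :=
  ⟨hT.mem_of_link_edge hP h3 hab hcd hnd hg hvg hag hbg,
    hT.mem_of_link_edge hP h3 hab (pair_comm c d ▸ hcd) (by grind) hg hvg hag hbg⟩

lemma LooseTriangleFree.center_mem (hT : LooseTriangleFree H) (hP : P33Free H)
    (h3 : ∀ e ∈ H, #e = 3) (hn : 7 ≤ #X) (hnd : [v, a, b, c, d].Nodup)
    (hvac : {v, a, c} ∈ H) (hvad : {v, a, d} ∈ H) (hvb : ∀ z ∈ X \ {v, a, b}, {v, b, z} ∈ H)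
    {y : V} (hy : y ∈ X \ {v, a, b, c, d}) {e : Finset V} (he : e ∈ H) (hye : y ∈ e) : v ∈ e := by
  by_contra hve
  simp only [List.nodup_cons, List.mem_cons, not_or, List.not_mem_nil] at hnd
  simp only [mem_sdiff, mem_insert, mem_singleton, not_or] at hy
  have hfour (s : Finset V) (hs : #s = 4) (hse : s ⊆ e) : False := by
    have := card_le_card hse
    have := h3 e he
    omega
  by_cases hbe : b ∈ e
  · obtain ⟨z, hz⟩ : (X \ (e ∪ {v, a, c})).Nonempty := by
      have hsix : #(e ∪ {v, a, c}) ≤ 6 :=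
        (card_union_le _ _).trans (Nat.add_le_add (h3 e he).le card_le_three)
      exact card_pos.1 ((Nat.sub_pos_of_lt (by omega)).trans_le (le_card_sdiff _ _))
    simp only [mem_sdiff, mem_union, mem_insert, mem_singleton, not_or] at hz
    have hvbz := hvb z (by grind)
    have hace := hT.mem_and_mem_of_link_edge hP h3 hvbz hvac (by grind) he hve hbe (by grind)
    exact hfour {a, b, c, y} (by grind) (by grind)
  · have hvyb : {v, y, b} ∈ H := pair_comm b y ▸ hvb y (by grind)
    have hace := hT.mem_and_mem_of_link_edge hP h3 hvyb hvac (by grind) he hve hye hbe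
    have hade := hT.mem_and_mem_of_link_edge hP h3 hvyb hvad (by grind) he hve hye hbe
    exact hfour {a, c, d, y} (by grind) (by grind)

/-- Two edges `{v, a, b}` and `{a, c, d}` meeting only in `a`, seen from `v`. They are
what prevents `v` from being link-closed. -/
structure IsCherry (H : Finset (Finset V)) (v a b c d : V) : Prop where
  nodup : [v, a, b, c, d].Nodup
  left_mem : {v, a, b} ∈ H
  right_mem : {a, c, d} ∈ H

lemma exists_isCherry_of_not_isLinkClosed (h3 : ∀ e ∈ H, #e = 3)
    (hv : ¬ IsLinkClosed H v) : ∃ a b c d, IsCherry H v a b c d := by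
  simp only [IsLinkClosed] at hv
  push Not at hv
  obtain ⟨g, hg, hvg, a, b, hab, hag, hbg⟩ := hv
  obtain ⟨c, d, hac, had, hcd, rfl⟩ := exists_eq_insert_pair_of_mem (h3 g hg) hag
  obtain ⟨hva, hvb, hab'⟩ := ne_of_card_triple (h3 _ hab)
  refine ⟨a, b, c, d, ?_, hab, hg⟩
  simp only [List.nodup_cons, List.mem_cons, not_or, List.not_mem_nil]
  grind

namespace IsCherry

variable {y z : V} {e : Finset V}

lemma mem_or_mem_or_eq (hC : IsCherry H v a b c d) (hT : LooseTriangleFree H)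
    (hP : P33Free H) (h3 : ∀ e ∈ H, #e = 3) (he : e ∈ H) (hve : v ∈ e) :
    a ∈ e ∨ b ∈ e ∨ e = {v, c, d} := by
  by_contra! hcon
  obtain ⟨hae, hbe, hne⟩ := hcon
  obtain ⟨p, q, hvp, hvq, hpq, rfl⟩ := exists_eq_insert_pair_of_mem (h3 e he) hve
  have hnd := hC.nodup
  simp only [List.nodup_cons, List.mem_cons, not_or, List.not_mem_nil] at hnd
  have hpqg := hT.mem_and_mem_of_link_edge hP h3 hC.left_mem he (by grind) hC.right_mem (by grind)
    (by grind) (by grind)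
  grind

lemma eq_or_eq_of_mem_pairLink (hC : IsCherry H v a b c d) (hT : LooseTriangleFree H)
    (hP : P33Free H) (h3 : ∀ e ∈ H, #e = 3) (hy : {v, a, y} ∈ H) (hz : {v, b, z} ∈ H) (hyb : y ≠ b)
    (hza : z ≠ a) (hyz : y ≠ z) : y = c ∨ y = d := by
  by_contra! hcon
  have hnd := hC.nodup
  simp only [List.nodup_cons, List.mem_cons, not_or, List.not_mem_nil] at hnd
  have hay := ne_of_card_triple (h3 _ hy)
  have hbz := ne_of_card_triple (h3 _ hz)
  have hb : b ∈ ({a, c, d} : Finset V) :=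
    hT.mem_of_link_edge hP h3 hy hz (by grind) hC.right_mem (by grind) (by grind) (by grind)
  grind

lemma card_filter_mem_le (hC : IsCherry H v a b c d) (hT : LooseTriangleFree H)
    (hP : P33Free H) (h3 : ∀ e ∈ H, #e = 3) (hX : ∀ e ∈ H, e ⊆ X) :
    #{e ∈ H | v ∈ e} ≤ 1 + #(pairLink H X v a) + #((pairLink H X v b).erase a) := by
  obtain ⟨hva, hvb, -⟩ := ne_of_card_triple (h3 _ hC.left_mem)
  have hsub : {e ∈ H | v ∈ e} ⊆ {{v, c, d}} ∪ (pairLink H X v a).image (fun z => {v, a, z}) ∪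
      ((pairLink H X v b).erase a).image fun z => {v, b, z} := fun e he => by
    obtain ⟨heH, hve⟩ := mem_filter.1 he
    by_cases hae : a ∈ e
    · exact mem_union_left _ (mem_union_right _ (mem_image_pairLink h3 hX hva heH hve hae))
    obtain hbe | rfl := (hC.mem_or_mem_or_eq hT hP h3 heH hve).resolve_left hae
    · obtain ⟨z, hz, rfl⟩ := mem_image.1 (mem_image_pairLink h3 hX hvb heH hve hbe)
      exact mem_union_right _ (mem_image_of_mem _ (mem_erase.2 ⟨by grind, hz⟩))
    · exact mem_union_left _ (mem_union_left _ (mem_singleton_self _))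
  calc #{e ∈ H | v ∈ e} ≤ _ := card_le_card hsub
    _ ≤ _ := (card_union_le _ _).trans (Nat.add_le_add_right (card_union_le _ _) _)
    _ ≤ _ := by gcongr <;> first | exact card_image_le | rfl

lemma card_filter_mem_le_or (hC : IsCherry H v a b c d) (hT : LooseTriangleFree H)
    (hP : P33Free H) (h3 : ∀ e ∈ H, #e = 3) (hX : ∀ e ∈ H, e ⊆ X) :
    #{e ∈ H | v ∈ e} ≤ #X ∨ #{e ∈ H | v ∈ e} ≤ #X + 1 ∧ pairLink H X v a = {b, c, d} ∧
      (pairLink H X v b).erase a = X \ {v, a, b} := by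
  have hdeg := hC.card_filter_mem_le hT hP h3 hX
  obtain ⟨hva, -, -⟩ := ne_of_card_triple (h3 _ hC.left_mem)
  have hvX : v ∈ X := hX _ hC.left_mem (by simp)
  have haX : a ∈ X := hX _ hC.left_mem (by simp)
  have hcardX : 3 ≤ #X := h3 _ hC.left_mem ▸ card_le_card (hX _ hC.left_mem)
  have ha := card_pairLink_le (X := X) h3 hvX haX hva
  by_cases hacd : pairLink H X v a ⊆ {b, c, d}
  · have hbsub : (pairLink H X v b).erase a ⊆ X \ {v, a, b} := by
      have := pairLink_subset (X := X) (u := v) (v := b) h3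
      grind
    have hbcard : #(X \ {v, a, b}) = #X - 3 := by
      rw [card_sdiff_of_subset (hX _ hC.left_mem), h3 _ hC.left_mem]
    have hacard := card_le_card hacd
    have hb := card_le_card hbsub
    have hbcd : #{b, c, d} ≤ 3 := card_le_three
    refine or_iff_not_imp_left.2 fun hnot => ⟨by omega, ?_, ?_⟩
    · exact eq_of_subset_of_card_le hacd (by omega)
    · exact eq_of_subset_of_card_le hbsub (by omega)
  · obtain ⟨y, hy, hybcd⟩ := not_subset.1 hacd
    have hb : (pairLink H X v b).erase a ⊆ {y} := fun z hz => by
      obtain ⟨hza, hz⟩ := mem_erase.1 hz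
      have := hC.eq_or_eq_of_mem_pairLink hT hP h3 (mem_pairLink.1 hy).2 (mem_pairLink.1 hz).2
      grind
    have hbcard : #((pairLink H X v b).erase a) ≤ 1 := card_le_card hb
    left
    omega

lemma card_filter_mem_le_one (hC : IsCherry H v a b c d) (hT : LooseTriangleFree H)
    (hP : P33Free H) (h3 : ∀ e ∈ H, #e = 3) (hn : 7 ≤ #X)
    (ha : pairLink H X v a = {b, c, d}) (hb : (pairLink H X v b).erase a = X \ {v, a, b})
    (hy : y ∈ X \ {v, a, b, c, d}) : #{e ∈ H | y ∈ e} ≤ 1 := by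
  have hnd := hC.nodup
  simp only [List.nodup_cons, List.mem_cons, not_or, List.not_mem_nil] at hnd
  have hvac : {v, a, c} ∈ H := (mem_pairLink.1 (ha ▸ by simp : c ∈ pairLink H X v a)).2
  have hvad : {v, a, d} ∈ H := (mem_pairLink.1 (ha ▸ by simp : d ∈ pairLink H X v a)).2
  have hvb (z : V) (hz : z ∈ X \ {v, a, b}) : {v, b, z} ∈ H :=
    (mem_pairLink.1 (mem_of_mem_erase (hb ▸ hz))).2
  suffices hsub : {e ∈ H | y ∈ e} ⊆ {{v, b, y}} from card_le_card hsub
  intro e he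
  obtain ⟨heH, hye⟩ := mem_filter.1 he
  have hve : v ∈ e := hT.center_mem hP h3 hn hC.nodup hvac hvad hvb hy heH hye
  obtain ⟨z, -, -, rfl⟩ := exists_eq_triple_of_mem_of_mem (h3 e heH) (by grind) hve hye
  have haz : a ≠ z := fun haz => by
    have : y ∈ pairLink H X v a := mem_pairLink.2 ⟨(mem_sdiff.1 hy).1, by rwa [haz, pair_comm]⟩
    grind
  have := hC.mem_or_mem_or_eq hT hP h3 heH hve
  grind

end IsCherry

lemma three_mul_card_le_of_card_filter_mem_le (h3 : ∀ e ∈ H, #e = 3) (hX : ∀ e ∈ H, e ⊆ X) {D : ℕ}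
    (hD : ∀ v ∈ X, #{e ∈ H | v ∈ e} ≤ D) : 3 * #H ≤ #X * D := by
  calc 3 * #H = ∑ e ∈ H, #(X ∩ e) := by
        rw [mul_comm, sum_const_nat fun e he => by rw [inter_eq_right.2 (hX e he), h3 e he]]
    _ ≤ #X * D := sum_card_inter_le hD

lemma LooseTriangleFree.card_filter_mem_le (hT : LooseTriangleFree H) (hP : P33Free H)
    (h3 : ∀ e ∈ H, #e = 3) (hX : ∀ e ∈ H, e ⊆ X) (hclosed : ∀ e ∈ H, v ∈ e → ¬ IsLinkClosed H v) :
    #{e ∈ H | v ∈ e} ≤ #X + 1 := by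
  obtain hempty | ⟨e, he⟩ := {e ∈ H | v ∈ e}.eq_empty_or_nonempty
  · rw [hempty, card_empty]
    exact Nat.zero_le _
  · obtain ⟨heH, hve⟩ := mem_filter.1 he
    obtain ⟨a, b, c, d, hC⟩ := exists_isCherry_of_not_isLinkClosed h3 (hclosed e heH hve)
    obtain hle | ⟨hle, -⟩ := hC.card_filter_mem_le_or hT hP h3 hX <;> omega

lemma LooseTriangleFree.exists_card_filter_mem_le_one (hT : LooseTriangleFree H) (hP : P33Free H)
    (h3 : ∀ e ∈ H, #e = 3) (hX : ∀ e ∈ H, e ⊆ X) (hclosed : ∀ e ∈ H, v ∈ e → ¬ IsLinkClosed H v)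
    (hn : 7 ≤ #X) (hdeg : #X < #{e ∈ H | v ∈ e}) : ∃ y ∈ X, #{e ∈ H | y ∈ e} ≤ 1 := by
  obtain ⟨e, he⟩ := card_pos.1 (Nat.zero_lt_of_lt hdeg)
  obtain ⟨heH, hve⟩ := mem_filter.1 he
  obtain ⟨a, b, c, d, hC⟩ := exists_isCherry_of_not_isLinkClosed h3 (hclosed e heH hve)
  obtain ⟨-, ha, hb⟩ := (hC.card_filter_mem_le_or hT hP h3 hX).resolve_left hdeg.not_ge
  obtain ⟨y, hy⟩ : (X \ {v, a, b, c, d}).Nonempty :=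
    card_pos.1 ((Nat.sub_pos_of_lt (card_le_five.trans_lt (by omega))).trans_le (le_card_sdiff _ _))
  exact ⟨y, (mem_sdiff.1 hy).1, hC.card_filter_mem_le_one hT hP h3 hn ha hb hy⟩

lemma LooseTriangleFree.three_mul_card_le (hT : LooseTriangleFree H) (hP : P33Free H)
    (h3 : ∀ e ∈ H, #e = 3) (hX : ∀ e ∈ H, e ⊆ X)
    (hclosed : ∀ v, ∀ e ∈ H, v ∈ e → ¬ IsLinkClosed H v) : 3 * #H ≤ #X * (#X + 1) :=
  three_mul_card_le_of_card_filter_mem_le h3 hX fun v _ =>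
    hT.card_filter_mem_le hP h3 hX (hclosed v)

lemma LooseTriangleFree.three_mul_card_le_sq_add_two (hT : LooseTriangleFree H) (hP : P33Free H)
    (h3 : ∀ e ∈ H, #e = 3) (hX : ∀ e ∈ H, e ⊆ X)
    (hclosed : ∀ v, ∀ e ∈ H, v ∈ e → ¬ IsLinkClosed H v) (hn : 7 ≤ #X) :
    3 * #H ≤ #X ^ 2 + 2 := by
  by_cases hdeg : ∀ v ∈ X, #{e ∈ H | v ∈ e} ≤ #X
  · have := three_mul_card_le_of_card_filter_mem_le h3 hX hdeg
    nlinarith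
  push Not at hdeg
  obtain ⟨v, -, hv⟩ := hdeg
  obtain ⟨y, hyX, hy⟩ := hT.exists_card_filter_mem_le_one hP h3 hX (hclosed v) hn hv
  have hrest : 3 * #{e ∈ H | y ∉ e} ≤ #(X.erase y) * (#X + 1) := by
    refine three_mul_card_le_of_card_filter_mem_le (fun e he => h3 e (mem_filter.1 he).1)
      (fun e he => ?_) fun v _ => ?_
    · exact subset_erase.2 ⟨hX e (mem_filter.1 he).1, (mem_filter.1 he).2⟩
    · exact (card_le_card (filter_subset_filter _ (filter_subset _ _))).trans
        (hT.card_filter_mem_le hP h3 hX (hclosed v))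
  have hsplit := card_filter_add_card_filter_not (s := H) (fun e => y ∈ e)
  have herase := card_erase_add_one hyX
  nlinarith

end

lemma P33Free.card_le_cases (hP : P33Free H) (h3 : ∀ e ∈ H, #e = 3) (hX : ∀ e ∈ H, e ⊆ X) :
    (∃ (R : Finset V) (w : ℕ), 6 + w + #R = #X ∧
      #H ≤ max 20 (max (19 + 3 * w) (10 + 6 * w)) + #{e ∈ H | e ⊆ R}) ∨
    (∃ (I : Finset V) (s : ℕ), 2 ≤ s ∧ s + 1 + #I = #X ∧
      2 * #H ≤ s * max (#X - 2) 3 + 2 * #{e ∈ H | e ⊆ I}) ∨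
    3 * #H ≤ #X * (#X + 1) ∧ (7 ≤ #X → 3 * #H ≤ #X ^ 2 + 2) := by
  by_cases hT : LooseTriangleFree H
  · by_cases hclosed : ∀ v, ∀ e ∈ H, v ∈ e → ¬ IsLinkClosed H v
    · exact .inr (.inr ⟨hT.three_mul_card_le hP h3 hX hclosed,
        hT.three_mul_card_le_sq_add_two hP h3 hX hclosed⟩)
    · push Not at hclosed
      obtain ⟨v, e, he, hve, hv⟩ := hclosed
      exact .inr (.inl (hv.exists_two_mul_card_le h3 hX he hve))
  · simp only [LooseTriangleFree, not_forall, not_not] at hT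
    obtain ⟨x, y, hxy⟩ := hT
    exact .inl (hxy.exists_card_le hP h3 hX)

-- Weaker than the sharp bound by a linear term, but valid on few vertices, so that induction works.
theorem P33Free.two_mul_card_le (hP : P33Free H) (h3 : ∀ e ∈ H, #e = 3) (hX : ∀ e ∈ H, e ⊆ X) :
    2 * #H ≤ #X * (#X + 1) := by
  induction hn : #X using Nat.strong_induction_on generalizing X H with
  | h n ih =>
  have hsub {Y : Finset V} (hY : #Y < n) : 2 * #{e ∈ H | e ⊆ Y} ≤ #Y * (#Y + 1) :=
    ih _ hY (hP.mono (filter_subset _ _)) (fun e he => h3 e (mem_filter.1 he).1)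
      (fun e he => (mem_filter.1 he).2) rfl
  obtain ⟨R, w, hcard, hle⟩ | ⟨I, s, hs, hcard, hle⟩ | ⟨hle, -⟩ := hP.card_le_cases h3 hX
  · have hR := hsub (Y := R) (by omega)
    obtain rfl : n = 6 + w + #R := by omega
    rcases max_cases 20 (max (19 + 3 * w) (10 + 6 * w)) with h | h <;>
      rcases max_cases (19 + 3 * w) (10 + 6 * w) with h' | h' <;> nlinarith
  · have hI := hsub (Y := I) (by omega)
    obtain rfl : n = s + 1 + #I := by omega
    have hmax : max (#X - 2) 3 ≤ s + #I + 2 := by omega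
    nlinarith [Nat.mul_le_mul_left s hmax]
  · rw [hn] at hle
    omega

lemma two_mul_le_mul_of_le_max_add {h t w r : ℕ} (ht : 2 * t ≤ r * (r + 1)) (hwr : 3 ≤ w + r)
    (hle : h ≤ max 20 (max (19 + 3 * w) (10 + 6 * w)) + t) :
    2 * h ≤ (5 + w + r) * (4 + w + r) := by
  obtain hw | hw := Nat.lt_or_ge w 3
  · interval_cases w <;> norm_num at hle <;> nlinarith
  · obtain ⟨u, rfl⟩ := Nat.exists_eq_add_of_le hw
    have hmax : max 20 (max (19 + 3 * (3 + u)) (10 + 6 * (3 + u))) ≤ 28 + 6 * u := by omega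
    nlinarith [Nat.zero_le (u * r), Nat.zero_le (u * u)]

theorem P33Free.two_mul_card_le_mul (hP : P33Free H) (h3 : ∀ e ∈ H, #e = 3)
    (hX : ∀ e ∈ H, e ⊆ X) (hn : 9 ≤ #X) : 2 * #H ≤ (#X - 1) * (#X - 2) := by
  have hsub (Y : Finset V) : 2 * #{e ∈ H | e ⊆ Y} ≤ #Y * (#Y + 1) :=
    (hP.mono (filter_subset _ _)).two_mul_card_le (fun e he => h3 e (mem_filter.1 he).1)
      (fun e he => (mem_filter.1 he).2)
  obtain ⟨R, w, hcard, hle⟩ | ⟨I, s, hs, hcard, hle⟩ | ⟨-, hle⟩ := hP.card_le_cases h3 hX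
  · have hR := hsub R
    have hX₁ : #X - 1 = 5 + w + #R := by omega
    have hX₂ : #X - 2 = 4 + w + #R := by omega
    have hwR : 3 ≤ w + #R := by omega
    rw [hX₁, hX₂]
    exact two_mul_le_mul_of_le_max_add hR hwR hle
  · have hI := hsub I
    have hX₁ : #X - 1 = s + #I := by omega
    rw [max_eq_left (by omega)] at hle
    obtain ⟨t, rfl⟩ : ∃ t, s = t + 2 := ⟨_, (Nat.sub_add_cancel hs).symm⟩
    have hX₂ : #X - 2 = t + 1 + #I := by omega
    rw [hX₂] at hle
    rw [hX₁, hX₂]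
    nlinarith [Nat.zero_le (t * #I)]
  · have hle := hle (by omega)
    obtain ⟨m, hm⟩ : ∃ m, #X = m + 9 := ⟨_, (Nat.sub_add_cancel hn).symm⟩
    have hX₁ : #X - 1 = m + 8 := by omega
    have hX₂ : #X - 2 = m + 7 := by omega
    rw [hm] at hle
    rw [hX₁, hX₂]
    nlinarith

theorem P33Free.card_le_choose (hP : P33Free H) (h3 : ∀ e ∈ H, #e = 3) (hX : ∀ e ∈ H, e ⊆ X)
    (hn : 9 ≤ #X) : #H ≤ (#X - 1).choose 2 := by
  rw [Nat.choose_two_right, Nat.le_div_iff_mul_le two_pos, mul_comm, Nat.sub_sub]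
  exact hP.two_mul_card_le_mul h3 hX hn

lemma p33Free_of_forall_mem (v : V) (hv : ∀ e ∈ H, v ∈ e) : P33Free H := by
  rintro ⟨e₁, e₂, e₃, h₁, -, h₃, -, -, -, hempty⟩
  exact notMem_empty v (hempty ▸ mem_inter.2 ⟨hv e₁ h₁, hv e₃ h₃⟩)

lemma card_filter_card_eq_succ_and_mem [Fintype V] (v : V) (m : ℕ) :
    #{e : Finset V | #e = m + 1 ∧ v ∈ e} = (Fintype.card V - 1).choose m := by
  have heq : ({e | #e = m + 1 ∧ v ∈ e} : Finset (Finset V)) =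
      ((univ.erase v).powersetCard m).image (insert v) := by
    ext e
    simp only [mem_filter, mem_univ, true_and, mem_image, mem_powersetCard]
    constructor
    · rintro ⟨hcard, hve⟩
      exact ⟨e.erase v, ⟨erase_subset_erase v (subset_univ e),
        by rw [card_erase_of_mem hve, hcard, Nat.add_sub_cancel]⟩, insert_erase hve⟩
    · rintro ⟨s, ⟨hs, rfl⟩, rfl⟩
      exact ⟨card_insert_of_notMem fun h => (mem_erase.1 (hs h)).1 rfl, mem_insert_self v s⟩
  have hinj : Set.InjOn (insert v) ((univ.erase v).powersetCard m : Set (Finset V)) :=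
    fun s hs t ht hst => by
      simp only [mem_coe, mem_powersetCard, subset_erase] at hs ht
      rw [← erase_insert hs.1.2, hst, erase_insert ht.1.2]
  rw [heq, card_image_of_injOn hinj, card_powersetCard, card_erase_of_mem (mem_univ v), card_univ]

end

/-- For `n ≥ 9`, every 3-uniform hypergraph on `n` vertices with no loose path
of length three has at most `C(n-1, 2)` edges, and the bound is attained by
the full star at any vertex (all 3-sets containing a fixed vertex). -/
theorem stmt_18 {V : Type*} [Fintype V] [DecidableEq V] {n : ℕ}
    (hn : 9 ≤ n) (hV : Fintype.card V = n) :
    (∀ H : Finset (Finset V), (∀ e ∈ H, e.card = 3) → P33Free H →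
      H.card ≤ Nat.choose (n - 1) 2) ∧
    (∀ v : V,
      P33Free ((Finset.univ : Finset (Finset V)).filter
        (fun e => e.card = 3 ∧ v ∈ e)) ∧
      ((Finset.univ : Finset (Finset V)).filter
        (fun e => e.card = 3 ∧ v ∈ e)).card = Nat.choose (n - 1) 2) := by
  subst hV
  exact ⟨fun H h3 hP => hP.card_le_choose h3 (fun e _ => e.subset_univ) hn, fun v =>
    ⟨p33Free_of_forall_mem v fun e he => (Finset.mem_filter.1 he).2.2,
      card_filter_card_eq_succ_and_mem v 2⟩⟩
end
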